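/- arXiv:2005.00297 — 3 statements merged into one kernel-verified Lean document; each statement's English description precedes it below -/
import Mathlib

section
/- Suppose every 5-edge-connected graph is Z_3-connected. Then every 5-edge-connected graph is Z_3-extendable at every vertex of degree 5. -/
open Finset

/-- A finite multigraph without loops: each edge `e` has two distinct
endpoints `fst e` and `snd e`.  An orientation is a map `D : E → Bool`,
where `D e = true` means `e` is directed from `fst e` to `snd e`. -/
structure Multigraph (V : Type) (E : Type) where
  fst : E → V
  snd : E → V
  no_loop : ∀ e, fst e ≠ snd e

namespace Multigraph

variable {V E : Type} [Fintype V] [DecidableEq V] [Fintype E] [DecidableEq E]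

/-- The tail (initial vertex) of edge `e` under orientation `D`. -/
def tail (G : Multigraph V E) (D : E → Bool) (e : E) : V :=
  if D e then G.fst e else G.snd e

/-- The head (terminal vertex) of edge `e` under orientation `D`. -/
def head (G : Multigraph V E) (D : E → Bool) (e : E) : V :=
  if D e then G.snd e else G.fst e

/-- Outdegree `d⁺_D(v)` (as an integer, for convenience). -/
def outDeg (G : Multigraph V E) (D : E → Bool) (v : V) : ℤ :=
  ((univ.filter fun e => G.tail D e = v).card : ℤ)

/-- Indegree `d⁻_D(v)`. -/
def inDeg (G : Multigraph V E) (D : E → Bool) (v : V) : ℤ :=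
  ((univ.filter fun e => G.head D e = v).card : ℤ)

/-- `e` is incident with `v`. -/
def Incident (G : Multigraph V E) (v : V) (e : E) : Prop :=
  G.fst e = v ∨ G.snd e = v

instance (G : Multigraph V E) (v : V) : DecidablePred (G.Incident v) := fun e =>
  inferInstanceAs (Decidable (G.fst e = v ∨ G.snd e = v))

/-- The degree of a vertex. -/
def degree (G : Multigraph V E) (v : V) : ℕ :=
  (univ.filter fun e => G.Incident v e).card

/-- The edge-cut `∂_G(A)`: edges with exactly one endpoint in `A`. -/
def cut (G : Multigraph V E) (A : Finset V) : Finset E :=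
  univ.filter fun e => ¬ ((G.fst e ∈ A) ↔ (G.snd e ∈ A))

/-- `G` is `k`-edge-connected: every edge-cut has at least `k` edges. -/
def EdgeConnected (G : Multigraph V E) (k : ℕ) : Prop :=
  ∀ A : Finset V, A.Nonempty → A ≠ univ → k ≤ (G.cut A).card

/-- A boundary function: values in `ℤ₃` summing to `0`. -/
def IsBoundary (β : V → ZMod 3) : Prop := ∑ v, β v = 0

/-- `D` is a `β`-orientation: `d⁺(v) - d⁻(v) ≡ β v (mod 3)` at every vertex. -/
def IsBetaOrientation (G : Multigraph V E) (β : V → ZMod 3) (D : E → Bool) : Prop :=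
  ∀ v : V, ((G.outDeg D v - G.inDeg D v : ℤ) : ZMod 3) = β v

/-- A mod 3-orientation: `d⁺(v) ≡ d⁻(v) (mod 3)` at every vertex. -/
def IsMod3Orientation (G : Multigraph V E) (D : E → Bool) : Prop :=
  ∀ v : V, ((G.outDeg D v - G.inDeg D v : ℤ) : ZMod 3) = 0

/-- `G` admits a mod 3-orientation (equivalently, a nowhere-zero 3-flow). -/
def Mod3Orientable (G : Multigraph V E) : Prop := ∃ D, G.IsMod3Orientation D

/-- `G` is `ℤ₃`-connected. -/
def Z3Connected (G : Multigraph V E) : Prop :=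
  ∀ β : V → ZMod 3, IsBoundary β → ∃ D, G.IsBetaOrientation β D

/-- `G` is `ℤ₃`-extendable at `x`: every pre-orientation of the edges at `x`
compatible with `β x` extends to a `β`-orientation of `G`. -/
def Z3ExtendableAt (G : Multigraph V E) (x : V) : Prop :=
  ∀ β : V → ZMod 3, IsBoundary β →
    ∀ D₀ : E → Bool, ((G.outDeg D₀ x - G.inDeg D₀ x : ℤ) : ZMod 3) = β x →
      ∃ D : E → Bool, (∀ e, G.Incident x e → D e = D₀ e) ∧ G.IsBetaOrientation β D

/-- `G` is mod-3-extendable at `x`: every pre-orientation of `∂(x)` with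
`d⁺(x) ≡ d⁻(x) (mod 3)` extends to a mod 3-orientation of `G`. -/
def Mod3ExtendableAt (G : Multigraph V E) (x : V) : Prop :=
  ∀ D₀ : E → Bool, ((G.outDeg D₀ x - G.inDeg D₀ x : ℤ) : ZMod 3) = 0 →
    ∃ D : E → Bool, (∀ e, G.Incident x e → D e = D₀ e) ∧ G.IsMod3Orientation D

/-- `A` is a `k`-critical-set: `d(A) ≤ k` but every nonempty proper subset has
larger boundary. -/
def CriticalSet (G : Multigraph V E) (k : ℕ) (A : Finset V) : Prop :=
  A.Nonempty ∧ A ≠ univ ∧ (G.cut A).card ≤ k ∧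
    ∀ B : Finset V, B.Nonempty → B ⊂ A → k < (G.cut B).card

/-- The set of edge-cuts of size exactly `k` (as sets of edges). -/
def kCuts (G : Multigraph V E) (k : ℕ) : Finset (Finset E) :=
  ((univ : Finset (Finset V)).filter
    fun A => A.Nonempty ∧ A ≠ univ ∧ (G.cut A).card = k).image G.cut

/-!
Prescribing the orientation at `x` amounts to asking for `x` to be a sink, as reversing edges at
`x` only shifts the boundary. Suppose that no `β`-orientation of `G` has a sink at `x`, where
`β x ≡ -5`. Splice `G` at `x` into a vertex `y` of degree 5 and boundary `-β x` of a
5-edge-connected graph `H`: delete `x` and `y` and join up their edges in pairs. The splice is again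
5-edge-connected, and each of its orientations induces one of `G` and one of `H`, in which `y` is a
source only if `x` is a sink. So `H` has an orientation with its given boundary in which `y` is
not a source, and repeated splicing achieves this at any set of such vertices `y` at once.

For `H = K₆` with all boundary values `5`, every vertex qualifies. The net outdegrees are odd,
congruent to `5` mod 3 and between `-5` and `5`, so they are `5` (a source) or `-1`. With no sources
they cannot sum to zero.
-/

section Orientations

variable {W F : Type} {H : Multigraph W F} {D : F → Bool} {v : W}

/-- The vertex `v` is a source of the orientation `D`: every edge at `v` points away from `v`. -/
def IsSource (H : Multigraph W F) (D : F → Bool) (v : W) : Prop :=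
  ∀ f, H.Incident v f → H.tail D f = v

/-- The vertex `v` is a sink of the orientation `D`: every edge at `v` points towards `v`. -/
def IsSink (H : Multigraph W F) (D : F → Bool) (v : W) : Prop :=
  ∀ f, H.Incident v f → H.head D f = v

lemma tail_ne_head (H : Multigraph W F) (D : F → Bool) (f : F) : H.tail D f ≠ H.head D f := by
  cases hf : D f <;> simp [tail, head, hf, H.no_loop f, (H.no_loop f).symm]

lemma incident_iff_tail_or_head (D : F → Bool) {f : F} :
    H.Incident v f ↔ H.tail D f = v ∨ H.head D f = v := by
  cases hf : D f <;> simp [Incident, tail, head, hf, or_comm]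

lemma isSink_iff_eq_decide [DecidableEq W] :
    H.IsSink D v ↔ ∀ f, H.Incident v f → D f = decide (H.snd f = v) := by
  refine forall₂_congr fun f hf => ?_
  have := H.no_loop f
  grind [head, Incident]

variable [DecidableEq W] [Fintype F]

/-- The net outdegree `d⁺_D(v) - d⁻_D(v)`. -/
def netOut (H : Multigraph W F) (D : F → Bool) (v : W) : ℤ :=
  H.outDeg D v - H.inDeg D v

lemma netOut_eq_sum (H : Multigraph W F) (D : F → Bool) (v : W) :
    H.netOut D v =
      ∑ f, ((if H.tail D f = v then 1 else 0) - (if H.head D f = v then 1 else 0)) := by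
  simp [netOut, outDeg, inDeg, sum_sub_distrib]

lemma sum_netOut [Fintype W] (H : Multigraph W F) (D : F → Bool) : ∑ v, H.netOut D v = 0 := by
  simp_rw [netOut_eq_sum]
  rw [sum_comm]
  simp [sum_sub_distrib]

lemma netOut_ite_add_netOut_ite (H : Multigraph W F) (p : F → Prop) [DecidablePred p]
    (D D' : F → Bool) (v : W) :
    H.netOut (fun f => if p f then D f else D' f) v +
      H.netOut (fun f => if p f then D' f else D f) v = H.netOut D v + H.netOut D' v := by
  simp only [netOut_eq_sum, ← sum_add_distrib]
  refine sum_congr rfl fun f _ => ?_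
  by_cases hf : p f
  · simp only [tail, head, if_pos hf]
    split_ifs <;> ring
  · simp only [tail, head, if_neg hf]
    split_ifs <;> ring

lemma outDeg_add_inDeg (H : Multigraph W F) (D : F → Bool) (v : W) :
    H.outDeg D v + H.inDeg D v = H.degree v := by
  rw [outDeg, inDeg, degree, ← Nat.cast_add]
  simp only [card_filter, ← sum_add_distrib, incident_iff_tail_or_head D]
  refine congrArg _ (sum_congr rfl fun f _ => ?_)
  have := H.tail_ne_head D f
  grind

lemma isSource_iff_inDeg_eq_zero : H.IsSource D v ↔ H.inDeg D v = 0 := by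
  simp only [IsSource, inDeg, Nat.cast_eq_zero, card_eq_zero, filter_eq_empty_iff, mem_univ,
    true_implies]
  refine forall_congr' fun f => ?_
  have := H.tail_ne_head D f
  rw [incident_iff_tail_or_head D]
  grind

lemma isSink_iff_outDeg_eq_zero : H.IsSink D v ↔ H.outDeg D v = 0 := by
  simp only [IsSink, outDeg, Nat.cast_eq_zero, card_eq_zero, filter_eq_empty_iff, mem_univ,
    true_implies]
  refine forall_congr' fun f => ?_
  have := H.tail_ne_head D f
  rw [incident_iff_tail_or_head D]
  grind

lemma isSink_iff_netOut_eq_neg_degree : H.IsSink D v ↔ H.netOut D v = -H.degree v := by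
  rw [isSink_iff_outDeg_eq_zero, netOut, ← outDeg_add_inDeg H D]
  omega

-- The net outdegree also has the parity of the degree, so the two agree mod 6.
lemma isSource_of_netOut_nonneg (hdeg : H.degree v ≤ 5)
    (hmod : (H.netOut D v : ZMod 3) = H.degree v) (hnonneg : 0 ≤ H.netOut D v) :
    H.IsSource D v := by
  have hmod' : H.netOut D v ≡ H.degree v [ZMOD 3] :=
    (ZMod.intCast_eq_intCast_iff _ _ 3).1 (by simpa using hmod)
  have hadd := H.outDeg_add_inDeg D v
  have hin : 0 ≤ H.inDeg D v := Nat.cast_nonneg _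
  rw [isSource_iff_inDeg_eq_zero]
  rw [Int.ModEq] at hmod'
  rw [netOut] at hmod' hnonneg
  omega

variable [Fintype W]

-- Reversing the edges at `x` shifts the boundary by a net outdegree, so a single
-- pre-orientation of them stands for all.
lemma z3ExtendableAt_of_exists_isSink {x : W}
    (h : ∀ β : W → ZMod 3, IsBoundary β → β x = -H.degree x →
      ∃ D, H.IsBetaOrientation β D ∧ H.IsSink D x) :
    H.Z3ExtendableAt x := by
  intro β hβ D₀ hD₀
  let T : F → Bool := fun f => if H.Incident x f then decide (H.snd f = x) else D₀ f
  have hT : H.IsSink T x := isSink_iff_eq_decide.2 fun f hf => if_pos hf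
  obtain ⟨D, hD, hDx⟩ := h (fun v => β v + H.netOut T v - H.netOut D₀ v)
    (by
      rw [IsBoundary] at hβ ⊢
      simp only [sum_sub_distrib, sum_add_distrib, ← Int.cast_sum, sum_netOut, hβ]
      simp)
    (by
      rw [← hD₀, isSink_iff_netOut_eq_neg_degree.1 hT]
      simp [netOut])
  refine ⟨fun f => if H.Incident x f then D₀ f else D f, fun f hf => if_pos hf, fun v => ?_⟩
  have hTD : T = fun f => if H.Incident x f then D f else D₀ f :=
    funext fun f => ite_congr rfl (fun hf => (isSink_iff_eq_decide.1 hDx f hf).symm) fun _ => rfl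
  have hswap := congrArg (Int.cast : ℤ → ZMod 3)
    (H.netOut_ite_add_netOut_ite (H.Incident x) D₀ D v)
  have hDv : (H.netOut D v : ZMod 3) = β v + H.netOut T v - H.netOut D₀ v := hD v
  rw [← hTD] at hswap
  push_cast at hswap
  change (H.netOut _ v : ZMod 3) = β v
  linear_combination hswap + hDv

end Orientations

section Cuts

variable {W F : Type} [DecidableEq W] [Fintype F] {H : Multigraph W F}

-- An edge at `y` lies in exactly one of the two cuts; any other edge lies in both or in neither.
lemma card_cut_add_card_cut_insert {y : W} {B : Finset W} (hy : y ∉ B) :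
    (H.cut B).card + (H.cut (insert y B)).card =
      2 * ((H.cut B).filter (¬ H.Incident y ·)).card + H.degree y := by
  simp only [cut, degree, filter_filter, card_filter, mul_sum, ← sum_add_distrib]
  refine sum_congr rfl fun f _ => ?_
  have := H.no_loop f
  simp only [Incident, mem_insert]
  grind

lemma EdgeConnected.le_two_mul_card_cut_filter [Fintype W] {k : ℕ} (hH : H.EdgeConnected k)
    {y : W} (hdeg : H.degree y = k) {B : Finset W} (hy : y ∉ B) (hB : B.Nonempty)
    (hB' : insert y B ≠ univ) :
    k ≤ 2 * ((H.cut B).filter (¬ H.Incident y ·)).card := by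
  have := hH B hB fun h => hy (h ▸ mem_univ y)
  have := hH (insert y B) (insert_nonempty y B) hB'
  have := card_cut_add_card_cut_insert (H := H) hy
  omega

end Cuts

/-- A contraction of `K` onto `H`: a map of vertices together with an identification of the edges
of `H` with edges of `K`, such that all remaining edges of `K` are collapsed to points.
An edge of `H` and its copy in `K` may list their two ends in opposite orders. -/
structure Contraction {U L W F : Type} (K : Multigraph U L) (H : Multigraph W F) where
  vertex : U → W
  edge : F ↪ L
  ends : ∀ f, s(vertex (K.fst (edge f)), vertex (K.snd (edge f))) = s(H.fst f, H.snd f)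
  collapsed : ∀ l ∉ Set.range edge, vertex (K.fst l) = vertex (K.snd l)

namespace Contraction

variable {U L W F : Type} {K : Multigraph U L} {H : Multigraph W F} (c : Contraction K H)

/-- The orientation of `H` induced by an orientation `D` of `K`: each edge points as its copy
in `K` does. -/
def induce [DecidableEq W] (D : L → Bool) (f : F) : Bool :=
  if c.vertex (K.fst (c.edge f)) = H.fst f then D (c.edge f) else !D (c.edge f)

lemma tail_induce [DecidableEq W] (D : L → Bool) (f : F) :
    H.tail (c.induce D) f = c.vertex (K.tail D (c.edge f)) := by
  have := H.no_loop f
  have := Sym2.eq_iff.1 (c.ends f)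
  grind [induce, tail]

lemma head_induce [DecidableEq W] (D : L → Bool) (f : F) :
    H.head (c.induce D) f = c.vertex (K.head D (c.edge f)) := by
  have := H.no_loop f
  have := Sym2.eq_iff.1 (c.ends f)
  grind [induce, head]

lemma vertex_tail_eq_vertex_head (D : L → Bool) {l : L} (hl : l ∉ Set.range c.edge) :
    c.vertex (K.tail D l) = c.vertex (K.head D l) := by
  cases hD : D l <;> simp [tail, head, hD, c.collapsed l hl]

lemma mem_range_edge_of_incident {u : U} (hu : ∀ u', c.vertex u' = c.vertex u → u' = u) {l : L}
    (hl : K.Incident u l) : l ∈ Set.range c.edge := by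
  by_contra hc
  have hends := c.collapsed l hc
  rcases hl with rfl | rfl
  · exact K.no_loop l (hu _ hends.symm).symm
  · exact K.no_loop l (hu _ hends)

lemma incident_edge_iff {u : U} (hu : ∀ u', c.vertex u' = c.vertex u → u' = u) {f : F} :
    K.Incident u (c.edge f) ↔ H.Incident (c.vertex u) f := by
  have hvertex (u') : u' = u ↔ c.vertex u' = c.vertex u := ⟨congrArg _, hu u'⟩
  rw [Incident, hvertex, hvertex]
  rcases Sym2.eq_iff.1 (c.ends f) with h | h <;> simp [Incident, h, or_comm]

lemma degree_eq_of_fiber_eq_singleton [DecidableEq U] [Fintype L] [DecidableEq W] [Fintype F]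
    {u : U} (hu : ∀ u', c.vertex u' = c.vertex u → u' = u) :
    K.degree u = H.degree (c.vertex u) := by
  rw [degree, degree, ← card_map c.edge]
  congr 1
  ext l
  simp only [mem_filter, mem_univ, true_and, mem_map]
  constructor
  · intro hl
    obtain ⟨f, rfl⟩ := c.mem_range_edge_of_incident hu hl
    exact ⟨f, (c.incident_edge_iff hu).1 hl, rfl⟩
  · rintro ⟨f, hf, rfl⟩
    exact (c.incident_edge_iff hu).2 hf

lemma isSource_of_isSource_induce [DecidableEq W] {u : U}
    (hu : ∀ u', c.vertex u' = c.vertex u → u' = u) {D : L → Bool}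
    (hD : H.IsSource (c.induce D) (c.vertex u)) : K.IsSource D u := by
  intro l hl
  obtain ⟨f, rfl⟩ := c.mem_range_edge_of_incident hu hl
  refine hu _ ?_
  rw [← c.tail_induce]
  exact hD f ((c.incident_edge_iff hu).1 hl)

variable [Fintype U] [DecidableEq U] [Fintype L] [DecidableEq W] [Fintype F]

lemma netOut_induce (D : L → Bool) (v : W) :
    H.netOut (c.induce D) v = ∑ u with c.vertex u = v, K.netOut D u := by
  have hfiber (u : U) : ∑ u' with c.vertex u' = v, (if u = u' then 1 else 0 : ℤ) =
      if c.vertex u = v then 1 else 0 := by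
    simp
  simp only [netOut_eq_sum]
  rw [sum_comm]
  simp only [sum_sub_distrib (s := univ.filter _), hfiber]
  refine Fintype.sum_of_injective c.edge c.edge.injective _ _ (fun l hl => ?_) fun f => ?_
  · rw [c.vertex_tail_eq_vertex_head D hl, sub_self]
  · rw [tail_induce, head_induce]

lemma isBetaOrientation_induce {β : U → ZMod 3} {β' : W → ZMod 3}
    (hβ : ∀ v, ∑ u with c.vertex u = v, β u = β' v) {D : L → Bool}
    (hD : K.IsBetaOrientation β D) : H.IsBetaOrientation β' (c.induce D) := by
  intro v
  rw [← hβ]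
  change (H.netOut _ v : ZMod 3) = _
  rw [netOut_induce, Int.cast_sum]
  exact sum_congr rfl fun u _ => hD u

lemma cut_preimage (B : Finset W) :
    K.cut (univ.filter (c.vertex · ∈ B)) = (H.cut B).map c.edge := by
  ext l
  simp only [cut, mem_filter, mem_univ, true_and, mem_map]
  by_cases hl : l ∈ Set.range c.edge
  · obtain ⟨f, rfl⟩ := hl
    rcases Sym2.eq_iff.1 (c.ends f) with h | h <;> simp [h, iff_comm]
  · simp only [c.collapsed l hl, not_true_eq_false, false_iff]
    exact fun ⟨f, _, hf⟩ => hl ⟨f, hf⟩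

lemma le_card_cut_of_saturated [Fintype W] {k : ℕ} (hH : H.EdgeConnected k) {A : Finset U}
    (hA : A.Nonempty) (hA' : A ≠ univ)
    (hsat : ∀ u u', c.vertex u = c.vertex u' → u ∈ A → u' ∈ A) : k ≤ (K.cut A).card := by
  have hpre : univ.filter (c.vertex · ∈ A.image c.vertex) = A := by
    ext u
    simp only [mem_filter, mem_univ, true_and, mem_image]
    exact ⟨fun ⟨u', hu', h⟩ => hsat u' u h hu', fun hu => ⟨u, hu, rfl⟩⟩
  rw [← hpre, cut_preimage, card_map]
  refine hH _ (hA.image _) fun h => hA' ?_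
  rw [← hpre, h]
  simp

end Contraction

section Splice

variable {V E W F : Type} [DecidableEq V] [DecidableEq W]
  {G : Multigraph V E} {H : Multigraph W F} {x : V} {y : W}

/-- The end of `e` other than `x`, for an edge `e` at `x`. -/
def otherEnd (G : Multigraph V E) (x : V) (e : E) : V :=
  if G.fst e = x then G.snd e else G.fst e

lemma otherEnd_ne (G : Multigraph V E) (x : V) (e : E) : G.otherEnd x e ≠ x := by
  have := G.no_loop e
  grind [otherEnd]

lemma mk_otherEnd {e : E} (he : G.Incident x e) :
    s(x, G.otherEnd x e) = s(G.fst e, G.snd e) := by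
  rw [Sym2.eq_iff]
  grind [otherEnd, Incident]

/-- The end in the splice of `G` and `H` of an edge `f` of `H` that ends at `w` in `H`. -/
def spliceEnd (σ : {f // H.Incident y f} ≃ {e // G.Incident x e}) (f : F) (w : W)
    (hw : w = y → H.Incident y f) : {v // v ≠ x} ⊕ {w // w ≠ y} :=
  if h : w = y then .inl ⟨G.otherEnd x (σ ⟨f, hw h⟩), G.otherEnd_ne x _⟩ else .inr ⟨w, h⟩

/-- The splice of `G` at `x` and `H` at `y`: delete `x` and `y` and join each edge at `y` to the
edge at `x` that `σ` matches with it. The joined edges are indexed by the edges of `H`. -/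
def splice (σ : {f // H.Incident y f} ≃ {e // G.Incident x e}) :
    Multigraph ({v // v ≠ x} ⊕ {w // w ≠ y}) ({e // ¬ G.Incident x e} ⊕ F) where
  fst := Sum.elim (fun e => .inl ⟨G.fst e, fun h => e.2 (.inl h)⟩)
    (fun f => spliceEnd σ f (H.fst f) .inl)
  snd := Sum.elim (fun e => .inl ⟨G.snd e, fun h => e.2 (.inr h)⟩)
    (fun f => spliceEnd σ f (H.snd f) .inr)
  no_loop := by
    rintro (e | f)
    · simpa using G.no_loop e
    · have := H.no_loop f
      simp only [Sum.elim_inr, spliceEnd]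
      grind

variable (σ : {f // H.Incident y f} ≃ {e // G.Incident x e})

/-- The contraction of the splice onto `G`, collapsing the part that comes from `H` to `x`. -/
def spliceLeft : Contraction (splice σ) G where
  vertex := Sum.elim (↑) fun _ => x
  edge := (Equiv.sumCompl (G.Incident x)).symm.toEmbedding.trans <|
    (Function.Embedding.sumMap (σ.symm.toEmbedding.trans (.subtype _)) (.refl _)).trans
      (Equiv.sumComm _ _).toEmbedding
  ends e := by
    obtain ⟨e | e, rfl⟩ := (Equiv.sumCompl (G.Incident x)).surjective e
    · obtain ⟨⟨f, hf⟩, rfl⟩ := σ.surjective e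
      have hloop := H.no_loop f
      rw [Equiv.sumCompl_apply_inl, ← mk_otherEnd (σ ⟨f, hf⟩).2]
      rcases hf with rfl | rfl
      · simp [splice, spliceEnd, hloop.symm, Sym2.eq_swap]
      · simp [splice, spliceEnd, hloop]
    · simp [splice]
  collapsed := by
    rintro (e | f) hl
    · exact absurd ⟨e, by simp⟩ hl
    · have hf : ¬ H.Incident y f := fun hf => hl ⟨σ ⟨f, hf⟩, by simp⟩
      rw [Incident, not_or] at hf
      simp [splice, spliceEnd, hf.1, hf.2]

/-- The contraction of the splice onto `H`, collapsing the part that comes from `G` to `y`. -/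
def spliceRight : Contraction (splice σ) H where
  vertex := Sum.elim (fun _ => y) (↑)
  edge := .inr
  ends f := by
    by_cases h₁ : H.fst f = y <;> by_cases h₂ : H.snd f = y <;> simp [splice, spliceEnd, h₁, h₂]
  collapsed := by
    rintro (e | f) hl
    · rfl
    · exact absurd ⟨f, rfl⟩ hl

lemma vertex_spliceRight_eq_coe_iff {w : {w // w ≠ y}} {u : {v // v ≠ x} ⊕ {w // w ≠ y}} :
    (spliceRight σ).vertex u = w ↔ u = .inr w := by
  rcases u with v | w'
  · simpa [spliceRight] using w.2.symm
  · simp [spliceRight, Subtype.ext_iff]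

lemma vertex_spliceLeft_eq_coe_iff {v : {v // v ≠ x}} {u : {v // v ≠ x} ⊕ {w // w ≠ y}} :
    (spliceLeft σ).vertex u = v ↔ u = .inl v := by
  rcases u with v' | w
  · simp [spliceLeft, Subtype.ext_iff]
  · simpa [spliceLeft] using v.2.symm

lemma spliceLeft_edge_apply (f : {f // H.Incident y f}) :
    (spliceLeft σ).edge (σ f) = .inr (f : F) := by
  simp [spliceLeft]

lemma isSink_spliceLeft_of_isSource_spliceRight {D : {e // ¬ G.Incident x e} ⊕ F → Bool}
    (hy : H.IsSource ((spliceRight σ).induce D) y) : G.IsSink ((spliceLeft σ).induce D) x := by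
  intro e he
  obtain ⟨f, hf⟩ := σ.surjective ⟨e, he⟩
  have hhead : H.head ((spliceRight σ).induce D) f ≠ y := fun h =>
    H.tail_ne_head _ _ ((hy f f.2).trans h.symm)
  rw [Contraction.head_induce] at hhead
  have hedge : (spliceLeft σ).edge e = .inr (f : F) := by rw [← spliceLeft_edge_apply, hf]
  rw [Contraction.head_induce, hedge]
  rcases h : (splice σ).head D (.inr (f : F)) with v | w
  · exact absurd (congrArg (spliceRight σ).vertex h) hhead
  · rfl

lemma isSource_splice_inr {D : {e // ¬ G.Incident x e} ⊕ F → Bool} (w : {w // w ≠ y})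
    (hw : H.IsSource ((spliceRight σ).induce D) w) : (splice σ).IsSource D (.inr w) :=
  (spliceRight σ).isSource_of_isSource_induce (u := .inr w)
    (fun _ => (vertex_spliceRight_eq_coe_iff σ).1) hw

section

variable [Fintype E] [Fintype F]

lemma degree_splice_inr (w : {w // w ≠ y}) : (splice σ).degree (.inr w) = H.degree w :=
  (spliceRight σ).degree_eq_of_fiber_eq_singleton (u := .inr w) fun _ =>
    (vertex_spliceRight_eq_coe_iff σ).1

lemma card_cut_filter_le_card_toLeft (A : Finset ({v // v ≠ x} ⊕ {w // w ≠ y})) :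
    ((G.cut (A.toLeft.map (.subtype _))).filter (¬ G.Incident x ·)).card ≤
      ((splice σ).cut A).toLeft.card := by
  rw [← card_map (.subtype _)]
  refine card_le_card fun e he => ?_
  simp only [mem_filter, cut, mem_univ, true_and] at he
  obtain ⟨hcut, he⟩ := he
  have hfst : G.fst e ≠ x := fun h => he (.inl h)
  have hsnd : G.snd e ≠ x := fun h => he (.inr h)
  refine mem_map.2 ⟨⟨e, he⟩, mem_toLeft.2 (mem_filter.2 ⟨mem_univ _, ?_⟩), rfl⟩
  simpa [splice, hfst, hsnd] using hcut

lemma card_cut_filter_le_card_toRight (A : Finset ({v // v ≠ x} ⊕ {w // w ≠ y})) :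
    ((H.cut (A.toRight.map (.subtype _))).filter (¬ H.Incident y ·)).card ≤
      ((splice σ).cut A).toRight.card := by
  refine card_le_card fun f hf => ?_
  simp only [mem_filter, cut, mem_univ, true_and] at hf
  obtain ⟨hcut, hf⟩ := hf
  have hfst : H.fst f ≠ y := fun h => hf (.inl h)
  have hsnd : H.snd f ≠ y := fun h => hf (.inr h)
  simpa [cut, splice, spliceEnd, hfst, hsnd] using hcut

end

variable [Fintype V] [Fintype W]

lemma sum_fiber_spliceLeft {M : Type*} [AddCommMonoid M]
    (g : {v // v ≠ x} ⊕ {w // w ≠ y} → M) (v : V) :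
    ∑ u with (spliceLeft σ).vertex u = v, g u =
      if h : v = x then ∑ w, g (.inr w) else g (.inl ⟨v, h⟩) := by
  split_ifs with h
  · subst h
    rw [sum_filter, Fintype.sum_sum_type, sum_eq_zero fun v' _ => if_neg v'.2, zero_add]
    simp [spliceLeft]
  · have hfiber (u) : (spliceLeft σ).vertex u = v ↔ u = .inl ⟨v, h⟩ :=
      vertex_spliceLeft_eq_coe_iff σ (v := ⟨v, h⟩)
    simp [hfiber, filter_eq']

lemma sum_fiber_spliceRight {M : Type*} [AddCommMonoid M]
    (g : {v // v ≠ x} ⊕ {w // w ≠ y} → M) (w : W) :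
    ∑ u with (spliceRight σ).vertex u = w, g u =
      if h : w = y then ∑ v, g (.inl v) else g (.inr ⟨w, h⟩) := by
  split_ifs with h
  · subst h
    rw [sum_filter, Fintype.sum_sum_type, add_comm, sum_eq_zero fun w' _ => if_neg w'.2, zero_add]
    simp [spliceRight]
  · have hfiber (u) : (spliceRight σ).vertex u = w ↔ u = .inr ⟨w, h⟩ :=
      vertex_spliceRight_eq_coe_iff σ (w := ⟨w, h⟩)
    simp [hfiber, filter_eq']

lemma sum_subtype_ne_eq_neg {β : V → ZMod 3} (hβ : IsBoundary β) (x : V) :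
    ∑ v : {v // v ≠ x}, β v = -β x :=
  eq_neg_of_add_eq_zero_right ((Fintype.sum_eq_add_sum_subtype_ne β x).symm.trans hβ)

lemma isBoundary_sumElim {β : V → ZMod 3} {β' : W → ZMod 3} (hβ : IsBoundary β)
    (hβ' : IsBoundary β') (hxy : β' y = -β x) :
    IsBoundary (Sum.elim (fun v : {v // v ≠ x} => β v) fun w : {w // w ≠ y} => β' w) := by
  rw [IsBoundary, Fintype.sum_sum_type]
  simp [sum_subtype_ne_eq_neg hβ, sum_subtype_ne_eq_neg hβ', hxy]

variable [Fintype E] [Fintype F] {β : V → ZMod 3} {β' : W → ZMod 3}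
  {D : {e // ¬ G.Incident x e} ⊕ F → Bool}

lemma isBetaOrientation_induce_spliceLeft (hβ' : IsBoundary β') (hxy : β' y = -β x)
    (hD : (splice σ).IsBetaOrientation (Sum.elim (fun v => β v) fun w => β' w) D) :
    G.IsBetaOrientation β ((spliceLeft σ).induce D) := by
  refine (spliceLeft σ).isBetaOrientation_induce (fun v => ?_) hD
  rw [sum_fiber_spliceLeft]
  split_ifs with h
  · simp [sum_subtype_ne_eq_neg hβ', hxy, h]
  · rfl

lemma isBetaOrientation_induce_spliceRight (hβ : IsBoundary β) (hxy : β' y = -β x)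
    (hD : (splice σ).IsBetaOrientation (Sum.elim (fun v => β v) fun w => β' w) D) :
    H.IsBetaOrientation β' ((spliceRight σ).induce D) := by
  refine (spliceRight σ).isBetaOrientation_induce (fun w => ?_) hD
  rw [sum_fiber_spliceRight]
  split_ifs with h
  · simp [sum_subtype_ne_eq_neg hβ, hxy, h]
  · rfl

lemma EdgeConnected.le_two_mul_of_mem_of_notMem {k : ℕ} (hG : G.EdgeConnected k)
    (hx : G.degree x = k) {B : Finset {v // v ≠ x}} {v v' : {v // v ≠ x}} (hv : v ∈ B)
    (hv' : v' ∉ B) :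
    k ≤ 2 * ((G.cut (B.map (.subtype _))).filter (¬ G.Incident x ·)).card := by
  refine hG.le_two_mul_card_cut_filter hx (by simp) ⟨v, mem_map_of_mem _ hv⟩ fun h => ?_
  have : (v' : V) ∈ insert x (B.map (.subtype _)) := h ▸ mem_univ _
  simp [v'.2, hv'] at this

-- A vertex set that is a union of fibres of one of the two contractions has the cut size of its
-- image there. Otherwise it separates `G - x` and separates `H - y`, and at least `k / 2` edges
-- are cut in each of these.
lemma EdgeConnected.splice {k : ℕ} (hG : G.EdgeConnected k) (hx : G.degree x = k)
    (hH : H.EdgeConnected k) (hy : H.degree y = k) : (splice σ).EdgeConnected k := by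
  intro A hA hA'
  by_cases hleft : ∀ v v', Sum.inl v ∈ A → Sum.inl v' ∈ A
  · refine (spliceRight σ).le_card_cut_of_saturated hH hA hA' fun u u' huu' hu => ?_
    rcases u with v | w
    · rcases u' with v' | w'
      · exact hleft v v' hu
      · exact absurd huu'.symm w'.2
    · rwa [(vertex_spliceRight_eq_coe_iff σ).1 huu'.symm]
  by_cases hright : ∀ w w', Sum.inr w ∈ A → Sum.inr w' ∈ A
  · refine (spliceLeft σ).le_card_cut_of_saturated hG hA hA' fun u u' huu' hu => ?_
    rcases u with v | w <;> rcases u' with v' | w'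
    · rwa [← Subtype.ext huu']
    · exact absurd huu' v.2
    · exact absurd huu'.symm v'.2
    · exact hright w w' hu
  push Not at hleft hright
  obtain ⟨v, v', hv, hv'⟩ := hleft
  obtain ⟨w, w', hw, hw'⟩ := hright
  have hGcut := hG.le_two_mul_of_mem_of_notMem hx (mem_toLeft.2 hv) (mt mem_toLeft.1 hv')
  have hHcut := hH.le_two_mul_of_mem_of_notMem hy (mem_toRight.2 hw) (mt mem_toRight.1 hw')
  have hGle := card_cut_filter_le_card_toLeft σ A
  have hHle := card_cut_filter_le_card_toRight σ A
  have := card_toLeft_add_card_toRight (u := (Multigraph.splice σ).cut A)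
  omega

end Splice

section SimpleGraph

variable {W : Type} (Γ : SimpleGraph W)

/-- A simple graph as a multigraph, with the two ends of each edge listed in an arbitrary order. -/
noncomputable def ofSimpleGraph : Multigraph W Γ.edgeSet where
  fst e := (Quot.out (e : Sym2 W)).1
  snd e := (Quot.out (e : Sym2 W)).2
  no_loop e h := Γ.not_isDiag_of_mem_edgeSet e.2 <| by
    rw [← Quot.out_eq (e : Sym2 W)]
    exact h

lemma mk_ofSimpleGraph (e : Γ.edgeSet) :
    s((ofSimpleGraph Γ).fst e, (ofSimpleGraph Γ).snd e) = e :=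
  Quot.out_eq (e : Sym2 W)

lemma incident_ofSimpleGraph_iff {v : W} {e : Γ.edgeSet} :
    (ofSimpleGraph Γ).Incident v e ↔ v ∈ (e : Sym2 W) := by
  rw [← mk_ofSimpleGraph, Sym2.mem_iff, Incident, eq_comm (a := v), eq_comm (a := v)]

variable [DecidableEq W] [Fintype Γ.edgeSet]

lemma mem_cut_ofSimpleGraph_iff {A : Finset W} {v w : W} (h : s(v, w) ∈ Γ.edgeSet) :
    ⟨s(v, w), h⟩ ∈ (ofSimpleGraph Γ).cut A ↔ ¬ (v ∈ A ↔ w ∈ A) := by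
  simp only [cut, mem_filter, mem_univ, true_and]
  rcases Sym2.eq_iff.1 (mk_ofSimpleGraph Γ ⟨s(v, w), h⟩) with ⟨h₁, h₂⟩ | ⟨h₁, h₂⟩ <;>
    rw [h₁, h₂]
  tauto

lemma degree_ofSimpleGraph (v : W) [Fintype (Γ.neighborSet v)] :
    (ofSimpleGraph Γ).degree v = Γ.degree v := by
  rw [← Γ.card_incidenceFinset_eq_degree, Γ.incidenceFinset_eq_filter, degree]
  simp_rw [incident_ofSimpleGraph_iff]
  rw [← card_map (.subtype _)]
  congr 1
  ext e
  simp [and_comm]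

end SimpleGraph

-- With `a ∈ A` and `b ∉ A`, the cut contains the edge from each `w ≠ b` to whichever of `a` and
-- `b` lies on the other side.
lemma edgeConnected_ofSimpleGraph_top {W : Type} [Fintype W] [DecidableEq W] :
    (ofSimpleGraph (⊤ : SimpleGraph W)).EdgeConnected (Fintype.card W - 1) := by
  rintro A ⟨a, ha⟩ hA
  obtain ⟨b, hb⟩ : ∃ b, b ∉ A := by simpa [eq_univ_iff_forall] using hA
  rw [← card_univ, ← card_erase_of_mem (mem_univ b), ← card_map (.subtype _)]
  refine card_le_card_of_injOn (fun w => s(w, if w ∈ A then b else a)) (fun w hw => ?_) ?_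
  · have hne : w ≠ if w ∈ A then b else a := by grind
    simp only [coe_map, Set.mem_image]
    exact ⟨⟨_, by simpa using hne⟩,
      (mem_cut_ofSimpleGraph_iff _ (by simpa using hne)).2 (by grind), rfl⟩
  · intro w hw w' hw' h
    simp only [coe_erase] at hw hw'
    have := Sym2.eq_iff.1 h
    grind

section Extension

variable {V E : Type} [Fintype V] [DecidableEq V] [Fintype E]
  {G : Multigraph V E} {x : V} {k : ℕ}

theorem exists_isBetaOrientation_forall_not_isSource
    (hyp : ∀ (W F : Type) [Fintype W] [DecidableEq W] [Fintype F] [DecidableEq F]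
      (H : Multigraph W F), H.EdgeConnected k → H.Z3Connected)
    (hG : G.EdgeConnected k) (hx : G.degree x = k) {β : V → ZMod 3} (hβ : IsBoundary β)
    (hsink : ∀ D, G.IsBetaOrientation β D → ¬ G.IsSink D x)
    {W F : Type} [Fintype W] [DecidableEq W] [Fintype F] {H : Multigraph W F}
    (hH : H.EdgeConnected k) {β' : W → ZMod 3} (hβ' : IsBoundary β') (S : Finset W)
    (hS : ∀ w ∈ S, H.degree w = k ∧ β' w = -β x) :
    ∃ D, H.IsBetaOrientation β' D ∧ ∀ w ∈ S, ¬ H.IsSource D w := by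
  rcases S.eq_empty_or_nonempty with rfl | ⟨y, hyS⟩
  · classical
    obtain ⟨D, hD⟩ := hyp W F H hH β' hβ'
    exact ⟨D, hD, by simp⟩
  obtain ⟨hy, hxy⟩ := hS y hyS
  have σ : {f // H.Incident y f} ≃ {e // G.Incident x e} := Fintype.equivOfCardEq <| by
    rw [Fintype.card_subtype, Fintype.card_subtype]
    exact hy.trans hx.symm
  obtain ⟨D, hD, hsource⟩ := exists_isBetaOrientation_forall_not_isSource hyp hG hx hβ hsink
    (hG.splice σ hx hH hy) (isBoundary_sumElim hβ hβ' hxy) ((S.subtype (· ≠ y)).map .inr) (by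
      intro u hu
      obtain ⟨w, hw, rfl⟩ := mem_map.1 hu
      rw [mem_subtype] at hw
      exact ⟨(degree_splice_inr σ w).trans (hS w hw).1, (hS w hw).2⟩)
  refine ⟨(spliceRight σ).induce D, isBetaOrientation_induce_spliceRight σ hβ hxy hD,
    fun w hw hwD => ?_⟩
  by_cases hwy : w = y
  · subst hwy
    exact hsink _ (isBetaOrientation_induce_spliceLeft σ hβ' hxy hD)
      (isSink_spliceLeft_of_isSource_spliceRight σ hwD)
  · exact hsource _ (mem_map_of_mem _ (mem_subtype.2 hw)) (isSource_splice_inr σ ⟨w, hwy⟩ hwD)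
termination_by S.card
decreasing_by
  rw [card_map, card_subtype, filter_ne']
  exact card_erase_lt_of_mem hyS

end Extension

/-- If every 5-edge-connected graph is `ℤ₃`-connected, then every
5-edge-connected graph is `ℤ₃`-extendable at every vertex of degree 5. -/
theorem stmt_12
    (hyp : ∀ (V E : Type) [Fintype V] [DecidableEq V] [Fintype E] [DecidableEq E] (G : Multigraph V E),
      G.EdgeConnected 5 → G.Z3Connected)
    {V E : Type} [Fintype V] [DecidableEq V] [Fintype E] [DecidableEq E] (G : Multigraph V E) (x : V)
    (h5 : G.EdgeConnected 5) (hx : G.degree x = 5) :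
    G.Z3ExtendableAt x := by
  refine z3ExtendableAt_of_exists_isSink fun β hβ hβx => ?_
  by_contra! hsink
  let K₆ := ofSimpleGraph (⊤ : SimpleGraph (Fin 6))
  have hdeg (i : Fin 6) : K₆.degree i = 5 := by
    rw [degree_ofSimpleGraph, SimpleGraph.complete_graph_degree, Fintype.card_fin]
  obtain ⟨D, hD, hsource⟩ := exists_isBetaOrientation_forall_not_isSource hyp h5 hx hβ hsink
    (H := K₆) edgeConnected_ofSimpleGraph_top (β' := fun _ => 5)
    (show ∑ _ : Fin 6, (5 : ZMod 3) = 0 by decide) univ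
    fun i _ => ⟨hdeg i, by simp [hβx, hx]⟩
  obtain ⟨i, hi, hnonneg⟩ : ∃ i ∈ univ, 0 ≤ K₆.netOut D i :=
    exists_le_of_sum_le univ_nonempty (by simp [sum_netOut])
  refine hsource i hi (isSource_of_netOut_nonneg (hdeg i).le ?_ hnonneg)
  rw [hdeg]
  exact hD i

end Multigraph
end

section
/- Suppose every 5-edge-connected graph G with a degree-5 vertex x is mod-3-extendable at x (i.e., any pre-orientation of ∂(x) with d^+(x) ≡ d^-(x) (mod 3) extends to a mod 3-orientation of G). Then every 4-edge-connected graph admits a nowhere-zero 3-flow, i.e., a mod 3-orientation. -/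
open Finset

/-!
Orientations become nowhere-zero `ZMod 3`-flows, and loops are kept, so that the edge type is
unchanged in an induction on the number of vertices. If the `4`-edge-connected graph `G` is
actually `5`-edge-connected, attach a vertex of degree `5` and extend a balanced assignment from it.
Otherwise take a minimal set `A` with a `4`-edge cut.

* If `A` is a single vertex `y`, then by Mader's argument one of two complete splittings at `y`
  keeps all other cuts large: obstructions to both would cross, and submodularity and parity
  exclude that.
* If not, `G/A` has a flow by induction. By minimality of `A`, doubling an edge of the cut makes
  `G/Aᶜ` a `5`-edge-connected graph whose contracted vertex has degree `5`. A value `c` on an edge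
  can be replaced by `-c` on both of two copies, as `-c - c = c` modulo `3`; hence the flow on the
  cut extends to `G/Aᶜ`, and the two flows are glued along the cut.
-/

open scoped symmDiff

universe u v

/-- A multigraph in which loops are allowed, so that contracting a vertex set or splitting a vertex
keeps the edge type. The order of the endpoints only serves as a reference orientation for flows. -/
structure Pseudograph (V E : Type*) where
  fst : E → V
  snd : E → V

namespace Pseudograph

section Cuts

variable {V E : Type*} [Fintype E] {G : Pseudograph V E} {A X Y : Set V} {e : E} {k : ℕ}

open Classical in
/-- The edge-cut `∂(A)`: the edges with exactly one endpoint in `A`. -/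
noncomputable def cut (G : Pseudograph V E) (A : Set V) : Finset E :=
  {e | ¬ (G.fst e ∈ A ↔ G.snd e ∈ A)}

lemma mem_cut : e ∈ G.cut A ↔ ¬ (G.fst e ∈ A ↔ G.snd e ∈ A) := by simp [cut]

lemma fst_ne_snd_of_mem_cut (he : e ∈ G.cut A) : G.fst e ≠ G.snd e :=
  fun heq => mem_cut.1 he (by rw [heq])

@[simp]
lemma cut_compl (G : Pseudograph V E) (A : Set V) : G.cut Aᶜ = G.cut A := by
  ext e
  simp only [mem_cut, Set.mem_compl_iff, not_iff_not]

lemma cut_symmDiff [DecidableEq E] (G : Pseudograph V E) (X Y : Set V) :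
    G.cut (X ∆ Y) = G.cut X ∆ G.cut Y := by
  ext e
  simp only [mem_cut, Finset.mem_symmDiff, Set.mem_symmDiff]
  tauto

lemma card_cut_union_of_disjoint [DecidableEq E] (G : Pseudograph V E) (h : Disjoint X Y) :
    #(G.cut (X ∪ Y)) + 2 * #(G.cut X ∩ G.cut Y) = #(G.cut X) + #(G.cut Y) := by
  have hunion := card_union_add_card_inter (G.cut X) (G.cut Y)
  have hsdiff := card_sdiff_add_card_eq_card
    (inter_subset_union (s := G.cut X) (t := G.cut Y))
  have hcut : G.cut (X ∪ Y) = (G.cut X ∪ G.cut Y) \ (G.cut X ∩ G.cut Y) := by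
    rw [← sup_eq_union, ← inf_eq_inter, ← symmDiff_eq_sup_sdiff_inf, ← cut_symmDiff,
      h.symmDiff_eq_sup]
    rfl
  rw [hcut]
  lia

lemma card_cut_inter_add_card_cut_union_le (G : Pseudograph V E) (X Y : Set V) :
    #(G.cut (X ∩ Y)) + #(G.cut (X ∪ Y)) ≤ #(G.cut X) + #(G.cut Y) := by
  classical
  rw [← card_union_add_card_inter, ← card_union_add_card_inter (G.cut X)]
  refine add_le_add (card_le_card fun e => ?_) (card_le_card fun e => ?_) <;>
    simp only [Finset.mem_union, Finset.mem_inter, mem_cut, Set.mem_union, Set.mem_inter_iff] <;>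
    tauto

lemma card_cut_sdiff_add_card_cut_sdiff_le (G : Pseudograph V E) (X Y : Set V) :
    #(G.cut (X \ Y)) + #(G.cut (Y \ X)) ≤ #(G.cut X) + #(G.cut Y) := by
  have hcompl : (X ∪ Yᶜ)ᶜ = Y \ X := by rw [Set.compl_union, compl_compl, Set.inter_comm]; rfl
  simpa only [← Set.sdiff_eq, ← cut_compl G (X ∪ Yᶜ), hcompl, cut_compl]
    using G.card_cut_inter_add_card_cut_union_le X Yᶜ

/-- `G` is `k`-edge-connected: every edge-cut has at least `k` edges. -/
def EdgeConnected (G : Pseudograph V E) (k : ℕ) : Prop :=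
  ∀ A : Set V, A.Nonempty → A ≠ Set.univ → k ≤ #(G.cut A)

lemma edgeConnected_of_notMem (x : V) (h : ∀ A : Set V, A.Nonempty → x ∉ A → k ≤ #(G.cut A)) :
    G.EdgeConnected k := by
  intro A hne huniv
  by_cases hx : x ∈ A
  · rw [← cut_compl]
    exact h Aᶜ (Set.nonempty_compl.2 huniv) (Set.notMem_compl_iff.2 hx)
  · exact h A hne hx

/-- A `k`-critical set: its cut has at most `k` edges, while the cuts of its proper nonempty
subsets have more. -/
structure IsCriticalSet (G : Pseudograph V E) (k : ℕ) (A : Set V) : Prop where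
  nonempty : A.Nonempty
  ne_univ : A ≠ Set.univ
  card_cut_le : #(G.cut A) ≤ k
  lt_card_cut : ∀ B ⊂ A, B.Nonempty → k < #(G.cut B)

lemma exists_isCriticalSet [Finite V] (h : ¬ G.EdgeConnected (k + 1)) :
    ∃ A, G.IsCriticalSet k A := by
  simp only [EdgeConnected, not_forall, not_le, Nat.lt_succ_iff] at h
  obtain ⟨A₀, hA₀, hA₀', hcut⟩ := h
  obtain ⟨A, hA⟩ := (Set.toFinite {A : Set V | A.Nonempty ∧ A ≠ Set.univ ∧ #(G.cut A) ≤ k}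
    ).exists_minimal ⟨A₀, hA₀, hA₀', hcut⟩
  obtain ⟨hne, huniv, hle⟩ := hA.prop
  refine ⟨A, hne, huniv, hle, fun B hBA hB => ?_⟩
  by_contra! hlt
  exact hA.not_prop_of_lt hBA ⟨hB, (hBA.trans_subset A.subset_univ).ne, hlt⟩

end Cuts

section Flows

variable {V E M : Type*} [Fintype E] [AddCommGroup M] {G : Pseudograph V E} {φ ψ : E → M}
  {A B : Set V}

/-- The net amount of `φ` leaving `A`, where `φ e` flows from `G.fst e` to `G.snd e`. -/
noncomputable def netOutflow (G : Pseudograph V E) (φ : E → M) (A : Set V) : M :=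
  ∑ e, (A.indicator (fun _ => φ e) (G.fst e) - A.indicator (fun _ => φ e) (G.snd e))

lemma netOutflow_add (G : Pseudograph V E) (φ ψ : E → M) (A : Set V) :
    G.netOutflow (φ + ψ) A = G.netOutflow φ A + G.netOutflow ψ A := by
  simp only [netOutflow, Pi.add_apply, Set.indicator_add, ← sum_add_distrib, add_sub_add_comm]

lemma netOutflow_single [DecidableEq E] (G : Pseudograph V E) (e : E) (m : M) (A : Set V) :
    G.netOutflow (Pi.single e m) A =
      A.indicator (fun _ => m) (G.fst e) - A.indicator (fun _ => m) (G.snd e) := by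
  rw [netOutflow, Fintype.sum_eq_single e fun e' he' => by simp [he'], Pi.single_eq_same]

lemma netOutflow_compl (G : Pseudograph V E) (φ : E → M) (A : Set V) :
    G.netOutflow φ Aᶜ = -G.netOutflow φ A := by
  simp only [netOutflow, Set.indicator_compl, Pi.sub_apply, sub_sub_sub_cancel_left,
    ← sum_neg_distrib, neg_sub]

lemma netOutflow_union (G : Pseudograph V E) (φ : E → M) (h : Disjoint A B) :
    G.netOutflow φ (A ∪ B) = G.netOutflow φ A + G.netOutflow φ B := by
  simp only [netOutflow, Set.indicator_union_of_disjoint h, ← sum_add_distrib, add_sub_add_comm]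

lemma netOutflow_congr (h : ∀ e ∈ G.cut A, φ e = ψ e) : G.netOutflow φ A = G.netOutflow ψ A := by
  classical
  refine sum_congr rfl fun e _ => ?_
  by_cases he : e ∈ G.cut A
  · rw [h e he]
  · simp only [mem_cut, not_not] at he
    simp [Set.indicator_apply, he]

lemma netOutflow_eq_zero_of_cut_eq_empty (φ : E → M) (h : G.cut A = ∅) :
    G.netOutflow φ A = 0 := by
  rw [netOutflow_congr (ψ := 0) (by simp [h])]
  simp [netOutflow]

/-- A flow with values in `M` that vanishes on no edge. -/
structure IsNowhereZeroFlow (G : Pseudograph V E) (φ : E → M) : Prop where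
  ne_zero : ∀ e, φ e ≠ 0
  netOutflow_eq_zero : ∀ v, G.netOutflow φ {v} = 0

/-- `G` has a nowhere-zero `ℤ₃`-flow. -/
def HasNowhereZeroThreeFlow (G : Pseudograph V E) : Prop :=
  ∃ φ : E → ZMod 3, G.IsNowhereZeroFlow φ

/-- Every nowhere-zero assignment that is balanced at `x` agrees on the edges at `x` with some
nowhere-zero `ℤ₃`-flow. -/
def ThreeFlowExtendableAt (G : Pseudograph V E) (x : V) : Prop :=
  ∀ φ₀ : E → ZMod 3, (∀ e, φ₀ e ≠ 0) → G.netOutflow φ₀ {x} = 0 →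
    ∃ φ, G.IsNowhereZeroFlow φ ∧ ∀ e ∈ G.cut {x}, φ e = φ₀ e

/-- The flow form of the hypothesis: nowhere-zero `ℤ₃`-flows extend from every vertex of degree `5`
of a `5`-edge-connected graph. -/
def FiveConnectedExtendability : Prop :=
  ∀ (V : Type u) (E : Type v) [Finite V] [Fintype E] (G : Pseudograph V E) (x : V),
    G.EdgeConnected 5 → #(G.cut {x}) = 5 → G.ThreeFlowExtendableAt x

end Flows

section Contraction

variable {V W E M : Type*} [Fintype E] [AddCommGroup M] {G : Pseudograph V E} {A : Set V} {k : ℕ}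

/-- The image of `G` under a map of vertices. -/
def map (G : Pseudograph V E) (f : V → W) : Pseudograph W E where
  fst e := f (G.fst e)
  snd e := f (G.snd e)

lemma cut_map (G : Pseudograph V E) (f : V → W) (B : Set W) :
    (G.map f).cut B = G.cut (f ⁻¹' B) := by
  ext e
  simp only [mem_cut, map, Set.mem_preimage]

lemma netOutflow_map (G : Pseudograph V E) (f : V → W) (φ : E → M) (B : Set W) :
    (G.map f).netOutflow φ B = G.netOutflow φ (f ⁻¹' B) := rfl

lemma EdgeConnected.map (h : G.EdgeConnected k) {f : V → W} (hf : f.Surjective) :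
    (G.map f).EdgeConnected k := by
  intro B hne huniv
  rw [cut_map]
  exact h _ (hne.preimage hf) fun hpre => huniv (hf.preimage_injective hpre)

open Classical in
/-- The vertex map that contracts `A` to the vertex `none`. -/
noncomputable def contractMap (A : Set V) (v : V) : Option ↥Aᶜ :=
  if h : v ∈ A then none else some ⟨v, h⟩

lemma contractMap_of_mem {v : V} (h : v ∈ A) : contractMap A v = none := dif_pos h

lemma contractMap_of_notMem {v : V} (h : v ∉ A) : contractMap A v = some ⟨v, h⟩ := dif_neg h

lemma contractMap_surjective (h : A.Nonempty) : (contractMap A).Surjective := by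
  rintro (_ | v)
  · exact h.imp fun _ => contractMap_of_mem
  · exact ⟨v, contractMap_of_notMem v.2⟩

lemma contractMap_preimage_none (A : Set V) : contractMap A ⁻¹' {none} = A := by
  ext v
  by_cases hv : v ∈ A <;> simp [contractMap, hv]

lemma contractMap_preimage_some (v : ↥Aᶜ) : contractMap A ⁻¹' {some v} = {v.1} := by
  ext w
  by_cases hw : w ∈ A
  · simpa [contractMap, hw] using fun h : w = v => v.2 (h ▸ hw)
  · simp [contractMap, hw, Subtype.ext_iff]

/-- The contraction `G/A`; edges inside `A` become loops. -/
noncomputable def contract (G : Pseudograph V E) (A : Set V) : Pseudograph (Option ↥Aᶜ) E :=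
  G.map (contractMap A)

lemma card_option_compl_lt [Finite V] (h : A.Nontrivial) :
    Nat.card (Option ↥Aᶜ) < Nat.card V := by
  have hA := (Set.one_lt_ncard A.toFinite).2 h
  rw [Finite.card_option, Nat.card_coe_set_eq]
  have := A.ncard_add_ncard_compl
  lia

namespace IsNowhereZeroFlow

variable {φ φ₁ φ₂ : E → M}

lemma netOutflow_of_contract (h : (G.contract A).IsNowhereZeroFlow φ) : G.netOutflow φ A = 0 := by
  rw [← h.netOutflow_eq_zero none, contract, netOutflow_map, contractMap_preimage_none]

lemma netOutflow_singleton_of_contract (h : (G.contract A).IsNowhereZeroFlow φ) {v : V}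
    (hv : v ∉ A) : G.netOutflow φ {v} = 0 := by
  rw [← h.netOutflow_eq_zero (some ⟨v, hv⟩), contract, netOutflow_map, contractMap_preimage_some]

lemma exists_of_contract_of_contract_compl (h₁ : (G.contract A).IsNowhereZeroFlow φ₁)
    (h₂ : (G.contract Aᶜ).IsNowhereZeroFlow φ₂) (hcut : ∀ e ∈ G.cut A, φ₂ e = φ₁ e) :
    ∃ φ : E → M, G.IsNowhereZeroFlow φ := by
  classical
  let φ : E → M := fun e => if G.fst e ∈ A ∧ G.snd e ∈ A then φ₂ e else φ₁ e
  refine ⟨φ, fun e => ?_, fun v => ?_⟩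
  · by_cases he : G.fst e ∈ A ∧ G.snd e ∈ A
    · simpa only [φ, if_pos he] using h₂.ne_zero e
    · simpa only [φ, if_neg he] using h₁.ne_zero e
  by_cases hv : v ∈ A
  · rw [← h₂.netOutflow_singleton_of_contract (Set.notMem_compl_iff.2 hv)]
    refine netOutflow_congr fun e he => ?_
    have := hcut e
    grind [mem_cut]
  · rw [← h₁.netOutflow_singleton_of_contract hv]
    refine netOutflow_congr fun e he => ?_
    grind [mem_cut]

lemma of_contract_pair {y z : V} (h : (G.contract {y, z}).IsNowhereZeroFlow φ)
    (hcut : G.cut {y} = ∅) : G.IsNowhereZeroFlow φ := by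
  refine ⟨h.ne_zero, fun v => ?_⟩
  have hy : G.netOutflow φ {y} = 0 := netOutflow_eq_zero_of_cut_eq_empty φ hcut
  rcases eq_or_ne v y with rfl | hvy
  · exact hy
  rcases eq_or_ne v z with rfl | hvz
  · have hyv := G.netOutflow_union φ (Set.disjoint_singleton.2 hvy.symm)
    rwa [Set.singleton_union, h.netOutflow_of_contract, hy, zero_add, eq_comm] at hyv
  · exact h.netOutflow_singleton_of_contract (by simp [hvy, hvz])

end IsNowhereZeroFlow

end Contraction

section DoubledEdge

variable {V E M : Type*} [Fintype E] [AddCommGroup M] {G : Pseudograph V E} {A : Set V} {e₀ : E}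

/-- `G` with a second, parallel copy `none` of the edge `e₀`. -/
def doubleEdge (G : Pseudograph V E) (e₀ : E) : Pseudograph V (Option E) where
  fst e := G.fst (e.getD e₀)
  snd e := G.snd (e.getD e₀)

lemma mem_cut_doubleEdge {e : Option E} : e ∈ (G.doubleEdge e₀).cut A ↔ e.getD e₀ ∈ G.cut A := by
  simp only [mem_cut, doubleEdge]

lemma card_cut_le_card_cut_doubleEdge (G : Pseudograph V E) (e₀ : E) (A : Set V) :
    #(G.cut A) ≤ #((G.doubleEdge e₀).cut A) := by
  rw [← card_map Function.Embedding.some]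
  refine card_le_card fun e he => ?_
  obtain ⟨e', he', rfl⟩ := Finset.mem_map.1 he
  exact mem_cut_doubleEdge.2 he'

lemma card_cut_doubleEdge (h : e₀ ∈ G.cut A) :
    #((G.doubleEdge e₀).cut A) = #(G.cut A) + 1 := by
  rw [← card_insertNone]
  congr 1
  ext (_ | e) <;> simp [mem_cut_doubleEdge, h]

lemma netOutflow_doubleEdge [DecidableEq E] (G : Pseudograph V E) (e₀ : E) (φ : Option E → M)
    (A : Set V) :
    (G.doubleEdge e₀).netOutflow φ A =
      G.netOutflow ((fun e => φ (some e)) + Pi.single e₀ (φ none)) A := by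
  rw [netOutflow_add, netOutflow_single, netOutflow, Fintype.sum_option, add_comm]
  rfl

lemma ThreeFlowExtendableAt.of_doubleEdge {x : V} (he₀ : e₀ ∈ G.cut {x})
    (h : (G.doubleEdge e₀).ThreeFlowExtendableAt x) : G.ThreeFlowExtendableAt x := by
  classical
  intro φ₀ hφ₀ hbal
  have neg_add_neg_self : ∀ c : ZMod 3, -c + -c = c := by decide
  let φ₀' : Option E → ZMod 3 :=
    fun e => e.elim (-φ₀ e₀) (Function.update φ₀ e₀ (-φ₀ e₀))
  have hmerge : (fun e => φ₀' (some e)) + Pi.single e₀ (φ₀' none) = φ₀ := by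
    ext e
    rcases eq_or_ne e e₀ with rfl | he
    · simp [φ₀', neg_add_neg_self]
    · simp [φ₀', he]
  have hφ₀' : ∀ e, φ₀' e ≠ 0 := by
    rintro (_ | e)
    · simpa [φ₀'] using hφ₀ e₀
    · rcases eq_or_ne e e₀ with rfl | he
      · simpa [φ₀'] using hφ₀ e
      · simpa [φ₀', he] using hφ₀ e
  obtain ⟨φ', hφ', hagree⟩ := h φ₀' hφ₀' (by rw [netOutflow_doubleEdge, hmerge, hbal])
  let φ : E → ZMod 3 := (fun e => φ' (some e)) + Pi.single e₀ (φ' none)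
  have hφ_e₀ : φ e₀ = φ₀ e₀ := by
    have hnone := hagree none (mem_cut_doubleEdge.2 he₀)
    have hsome := hagree (some e₀) (mem_cut_doubleEdge.2 he₀)
    simpa [φ, hnone, hsome] using congrFun hmerge e₀
  have hφ_of_ne : ∀ e ≠ e₀, φ e = φ' (some e) := fun e he => by simp [φ, he]
  refine ⟨φ, ⟨fun e => ?_, fun v => ?_⟩, fun e he => ?_⟩
  · rcases eq_or_ne e e₀ with rfl | hne
    · exact hφ_e₀ ▸ hφ₀ e
    · exact hφ_of_ne e hne ▸ hφ'.ne_zero (some e)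
  · rw [← hφ'.netOutflow_eq_zero v, netOutflow_doubleEdge]
  · rcases eq_or_ne e e₀ with rfl | hne
    · exact hφ_e₀
    · rw [hφ_of_ne e hne, hagree (some e) (mem_cut_doubleEdge.2 he)]
      simp [φ₀', hne]

end DoubledEdge

section CriticalSets

variable {V E : Type*} [Fintype E] {G : Pseudograph V E} {A : Set V} {e₀ : E} {k : ℕ}

lemma IsCriticalSet.card_cut_eq (hA : G.IsCriticalSet k A) (hG : G.EdgeConnected k) :
    #(G.cut A) = k :=
  hA.card_cut_le.antisymm (hG A hA.nonempty hA.ne_univ)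

lemma cut_contract_compl_none (G : Pseudograph V E) (A : Set V) :
    (G.contract Aᶜ).cut {none} = G.cut A := by
  rw [contract, cut_map, contractMap_preimage_none, cut_compl]

lemma IsCriticalSet.edgeConnected_doubleEdge_contract_compl (hA : G.IsCriticalSet k A)
    (hG : G.EdgeConnected k) (he₀ : e₀ ∈ G.cut A) :
    ((G.contract Aᶜ).doubleEdge e₀).EdgeConnected (k + 1) := by
  refine edgeConnected_of_notMem none fun B hB hnone => ?_
  have hcut : (G.contract Aᶜ).cut B = G.cut (contractMap Aᶜ ⁻¹' B) := cut_map _ _ _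
  have hne : (contractMap Aᶜ ⁻¹' B).Nonempty :=
    hB.preimage (contractMap_surjective (Set.nonempty_compl.2 hA.ne_univ))
  have hsub : contractMap Aᶜ ⁻¹' B ⊆ A := fun v hv => by
    by_contra hvA
    exact hnone (contractMap_of_mem (Set.mem_compl hvA) ▸ hv)
  rcases hsub.eq_or_ssubset with heq | hssub
  · rw [heq] at hcut
    rw [card_cut_doubleEdge (hcut ▸ he₀), hcut, hA.card_cut_eq hG]
  · exact (hcut ▸ hA.lt_card_cut _ hssub hne).trans_le (card_cut_le_card_cut_doubleEdge _ _ _)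

end CriticalSets

section Splitting

variable {V E M : Type*} [Fintype E] [DecidableEq E] [AddCommGroup M] {G : Pseudograph V E}
  {A : Set V} {p q : E} {φ : E → M}

/-- `G` with the endpoints of the edges in `R` exchanged. -/
def reverse (G : Pseudograph V E) (R : Finset E) : Pseudograph V E where
  fst := R.piecewise G.snd G.fst
  snd := R.piecewise G.fst G.snd

@[simp]
lemma cut_reverse (G : Pseudograph V E) (R : Finset E) (A : Set V) :
    (G.reverse R).cut A = G.cut A := by
  ext e
  by_cases he : e ∈ R <;> simp [mem_cut, reverse, he, iff_comm]

lemma netOutflow_reverse (G : Pseudograph V E) (R : Finset E) (φ : E → M) (A : Set V) :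
    (G.reverse R).netOutflow φ A = G.netOutflow (R.piecewise (-φ) φ) A := by
  classical
  refine sum_congr rfl fun e _ => ?_
  by_cases he : e ∈ R
  · simp only [reverse, he, piecewise_eq_of_mem, Pi.neg_apply, Set.indicator_apply]
    split_ifs <;> simp
  · simp [reverse, he]

lemma IsNowhereZeroFlow.of_reverse {R : Finset E} (h : (G.reverse R).IsNowhereZeroFlow φ) :
    G.IsNowhereZeroFlow (R.piecewise (-φ) φ) := by
  refine ⟨fun e => ?_, fun v => (G.netOutflow_reverse R φ {v}).symm.trans (h.netOutflow_eq_zero v)⟩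
  by_cases he : e ∈ R <;> simpa [he] using h.ne_zero e

/-- Splitting off two edges `p` and `q` with the same tail: `p` becomes an edge from the head of `q`
to the head of `p`, and `q` is kept as a loop at the common tail. -/
def splitOff (G : Pseudograph V E) (p q : E) : Pseudograph V E where
  fst := Function.update G.fst p (G.snd q)
  snd := Function.update G.snd q (G.fst q)

lemma mem_cut_splitOff_of_ne {e : E} (hp : e ≠ p) (hq : e ≠ q) :
    e ∈ (G.splitOff p q).cut A ↔ e ∈ G.cut A := by
  simp [mem_cut, splitOff, hp, hq]

lemma right_notMem_cut_splitOff (hpq : p ≠ q) : q ∉ (G.splitOff p q).cut A := by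
  simp [mem_cut, splitOff, hpq.symm]

lemma left_mem_cut_splitOff (hpq : p ≠ q) (hfst : G.fst p = G.fst q) :
    p ∈ (G.splitOff p q).cut A ↔ ¬ (p ∈ G.cut A ↔ q ∈ G.cut A) := by
  simp only [mem_cut, splitOff, Function.update_self, Function.update_of_ne hpq, hfst]
  tauto

lemma card_cut_splitOff (hpq : p ≠ q) (hfst : G.fst p = G.fst q) :
    #((G.splitOff p q).cut A) + (if p ∈ G.cut A ∧ q ∈ G.cut A then 2 else 0) = #(G.cut A) := by
  have hq : q ∉ (G.splitOff p q).cut A := right_notMem_cut_splitOff hpq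
  have hp := left_mem_cut_splitOff (A := A) hpq hfst
  have hrest : ((G.splitOff p q).cut A \ {p, q}) = G.cut A \ {p, q} := by
    ext e
    simp only [Finset.mem_sdiff, Finset.mem_insert, Finset.mem_singleton, not_or]
    exact and_congr_left fun he => mem_cut_splitOff_of_ne he.1 he.2
  rw [← card_sdiff_add_card_inter _ {p, q}, hrest, ← card_sdiff_add_card_inter (G.cut A) {p, q},
    add_assoc]
  congr 1
  by_cases hpA : p ∈ G.cut A <;> by_cases hqA : q ∈ G.cut A <;>
    simp [inter_insert_of_mem, inter_insert_of_notMem, inter_singleton_of_mem,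
      inter_singleton_of_notMem, hp, hq, hpA, hqA, hpq]

lemma netOutflow_splitOff (hpq : p ≠ q) (hfst : G.fst p = G.fst q) (φ : E → M) (A : Set V) :
    (G.splitOff p q).netOutflow φ A = G.netOutflow (Function.update φ q (-φ p)) A := by
  classical
  have hedges (H : Pseudograph V E) (ψ : E → M) := sum_sdiff (M := M)
    (f := fun e => A.indicator (fun _ => ψ e) (H.fst e) - A.indicator (fun _ => ψ e) (H.snd e))
    (subset_univ {p, q})
  rw [netOutflow, netOutflow, ← hedges, ← hedges, sum_pair hpq, sum_pair hpq]
  congr 1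
  · refine sum_congr rfl fun e he => ?_
    simp only [Finset.mem_sdiff, Finset.mem_insert, Finset.mem_singleton, not_or] at he
    simp [splitOff, he.2.1, he.2.2]
  · simp only [splitOff, Function.update_self, Function.update_of_ne hpq,
      Function.update_of_ne hpq.symm, hfst, Set.indicator_apply]
    split_ifs <;> simp

lemma IsNowhereZeroFlow.of_splitOff (hpq : p ≠ q) (hfst : G.fst p = G.fst q)
    (h : (G.splitOff p q).IsNowhereZeroFlow φ) :
    G.IsNowhereZeroFlow (Function.update φ q (-φ p)) := by
  refine ⟨fun e => ?_, fun v =>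
    (netOutflow_splitOff hpq hfst φ {v}).symm.trans (h.netOutflow_eq_zero v)⟩
  rcases eq_or_ne e q with rfl | he
  · simpa using h.ne_zero p
  · simpa [he] using h.ne_zero e

end Splitting

section FourStar

variable {V E M : Type*} [Fintype E] [DecidableEq E] [AddCommGroup M] {G : Pseudograph V E}
  {A X Y : Set V} {y : V} {p q r t : E}

/-- The vertex `y` has degree `4`, and `p`, `q`, `r`, `t` are its edges, all directed away
from it. -/
structure IsFourStar (G : Pseudograph V E) (y : V) (p q r t : E) : Prop where
  nodup : [p, q, r, t].Nodup
  cut_eq : G.cut {y} = {p, q, r, t}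
  fst_eq : ∀ e ∈ G.cut {y}, G.fst e = y

/-- The result of splitting a degree-`4` vertex completely, along the pairs `{p, q}` and
`{r, t}`. -/
def completeSplit (G : Pseudograph V E) (p q r t : E) : Pseudograph V E :=
  (G.splitOff p q).splitOff r t

/-- A set whose cut becomes smaller than `4` when the degree-`4` vertex `y` is split completely
along `{p, q}` and `{r, t}`, normalised so that it separates `y` from the pair `{p, q}`. -/
structure IsSplittingObstruction (G : Pseudograph V E) (y : V) (p q r t : E) (X : Set V) :
    Prop where
  notMem : y ∉ X
  card_cut_le : #(G.cut X) ≤ 5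
  left_mem : G.snd p ∈ X ∧ G.snd q ∈ X
  right_notMem : G.snd r ∉ X ∧ G.snd t ∉ X

lemma exists_isFourStar_reverse (hcard : #(G.cut {y}) = 4) :
    ∃ R p q r t, (G.reverse R).IsFourStar y p q r t := by
  classical
  obtain ⟨p, q, r, t, hpq, hpr, hpt, hqr, hqt, hrt, hcut⟩ := Finset.card_eq_four.1 hcard
  let R : Finset E := {e | G.snd e = y}
  refine ⟨R, p, q, r, t, ⟨by simp [hpq, hpr, hpt, hqr, hqt, hrt], by rw [cut_reverse, hcut],
    fun e he => ?_⟩⟩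
  rw [cut_reverse, mem_cut] at he
  by_cases hsnd : G.snd e = y
  · simp [reverse, R, hsnd]
  · simpa [reverse, R, hsnd] using he

namespace IsFourStar

lemma pairwise_ne (h : G.IsFourStar y p q r t) :
    p ≠ q ∧ p ≠ r ∧ p ≠ t ∧ q ≠ r ∧ q ≠ t ∧ r ≠ t := by
  simpa [and_assoc] using h.nodup

lemma swap (h : G.IsFourStar y p q r t) : G.IsFourStar y p r q t where
  nodup := by have := h.nodup; grind
  cut_eq := by rw [h.cut_eq]; grind
  fst_eq := h.fst_eq

lemma card_cut (h : G.IsFourStar y p q r t) : #(G.cut {y}) = 4 := by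
  rw [h.cut_eq]
  have := h.nodup
  grind

lemma mem_cut_iff (h : G.IsFourStar y p q r t) (hy : y ∉ A) {e : E} (he : e ∈ [p, q, r, t]) :
    e ∈ G.cut A ↔ G.snd e ∈ A := by
  have hfst := h.fst_eq e (by rw [h.cut_eq]; simpa using he)
  rw [mem_cut, hfst]
  tauto

lemma snd_ne (h : G.IsFourStar y p q r t) {e : E} (he : e ∈ [p, q, r, t]) : G.snd e ≠ y := by
  have hcut : e ∈ G.cut {y} := by rw [h.cut_eq]; simpa using he
  have hfst := h.fst_eq e hcut
  simpa [mem_cut, hfst] using hcut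

open Classical in
lemma card_cut_singleton_inter (h : G.IsFourStar y p q r t) (hy : y ∉ A) :
    #(G.cut {y} ∩ G.cut A) = (if G.snd p ∈ A then 1 else 0) + (if G.snd q ∈ A then 1 else 0) +
      (if G.snd r ∈ A then 1 else 0) + (if G.snd t ∈ A then 1 else 0) := by
  obtain ⟨hpq, hpr, hpt, hqr, hqt, hrt⟩ := h.pairwise_ne
  rw [h.cut_eq, ← filter_mem_eq_inter, card_filter, sum_insert (by simp [hpq, hpr, hpt]),
    sum_insert (by simp [hqr, hqt]), sum_pair hrt]
  simp [h.mem_cut_iff hy, add_assoc]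

open Classical in
lemma card_cut_insert (h : G.IsFourStar y p q r t) (hy : y ∉ A) :
    #(G.cut (insert y A)) + 2 * ((if G.snd p ∈ A then 1 else 0) + (if G.snd q ∈ A then 1 else 0) +
      (if G.snd r ∈ A then 1 else 0) + (if G.snd t ∈ A then 1 else 0)) = #(G.cut A) + 4 := by
  rw [← h.card_cut_singleton_inter hy, ← Set.singleton_union,
    card_cut_union_of_disjoint G (Set.disjoint_singleton_left.2 hy), h.card_cut, add_comm]

lemma splitOff_fst_eq (h : G.IsFourStar y p q r t) :
    (G.splitOff p q).fst r = (G.splitOff p q).fst t := by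
  obtain ⟨-, hpr, hpt, -⟩ := h.pairwise_ne
  simp only [splitOff, Function.update_of_ne hpr.symm, Function.update_of_ne hpt.symm]
  rw [h.fst_eq r (by simp [h.cut_eq]), h.fst_eq t (by simp [h.cut_eq])]

lemma fst_left_eq (h : G.IsFourStar y p q r t) : G.fst p = G.fst q := by
  rw [h.fst_eq p (by simp [h.cut_eq]), h.fst_eq q (by simp [h.cut_eq])]

open Classical in
lemma card_cut_completeSplit (h : G.IsFourStar y p q r t) (hy : y ∉ A) :
    #((G.completeSplit p q r t).cut A) + (if G.snd p ∈ A ∧ G.snd q ∈ A then 2 else 0) +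
      (if G.snd r ∈ A ∧ G.snd t ∈ A then 2 else 0) = #(G.cut A) := by
  obtain ⟨hpq, hpr, hpt, hqr, hqt, hrt⟩ := h.pairwise_ne
  have hfirst := card_cut_splitOff (A := A) hpq h.fst_left_eq
  have hsecond := card_cut_splitOff (A := A) hrt h.splitOff_fst_eq
  have mem_iff {e : E} (he : e ∈ [p, q, r, t]) : e ∈ G.cut A ↔ G.snd e ∈ A :=
    h.mem_cut_iff hy he
  simp only [mem_cut_splitOff_of_ne hpr.symm hqr.symm, mem_cut_splitOff_of_ne hpt.symm hqt.symm,
    mem_iff, List.mem_cons, true_or, or_true] at hfirst hsecond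
  rw [completeSplit, ← hfirst, ← hsecond, add_right_comm]

lemma exists_isNowhereZeroFlow_of_completeSplit (h : G.IsFourStar y p q r t) {φ : E → M}
    (hφ : (G.completeSplit p q r t).IsNowhereZeroFlow φ) :
    ∃ φ' : E → M, G.IsNowhereZeroFlow φ' := by
  obtain ⟨hpq, -, -, -, -, hrt⟩ := h.pairwise_ne
  exact ⟨_, (hφ.of_splitOff hrt h.splitOff_fst_eq).of_splitOff hpq h.fst_left_eq⟩

lemma cut_completeSplit_eq_empty (h : G.IsFourStar y p q r t) :
    (G.completeSplit p q r t).cut {y} = ∅ := by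
  rw [← card_eq_zero]
  have hcard := h.card_cut_completeSplit (A := {y}ᶜ) (by simp)
  simp only [Set.mem_compl_iff, Set.mem_singleton_iff, h.snd_ne, List.mem_cons, true_or, or_true,
    not_false_eq_true, and_self, if_true, cut_compl, h.card_cut] at hcard
  lia

lemma exists_isSplittingObstruction (h : G.IsFourStar y p q r t) (hG : G.EdgeConnected 4)
    (hy : y ∉ A) (hne : A.Nonempty) (huniv : insert y A ≠ Set.univ)
    (hlt : #((G.completeSplit p q r t).cut A) < 4) :
    ∃ X, G.IsSplittingObstruction y p q r t X := by
  classical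
  have hA := hG A hne fun hA => hy (hA ▸ Set.mem_univ y)
  have hyA := hG (insert y A) (Set.insert_nonempty y A) huniv
  have hinsert := h.card_cut_insert hy
  have hsplit := h.card_cut_completeSplit hy
  have hp := h.snd_ne (e := p) (by simp)
  have hq := h.snd_ne (e := q) (by simp)
  have hr := h.snd_ne (e := r) (by simp)
  have ht := h.snd_ne (e := t) (by simp)
  by_cases hpA : G.snd p ∈ A ∧ G.snd q ∈ A
  · have hrtA : G.snd r ∉ A ∧ G.snd t ∉ A := by split_ifs at * <;> grind
    refine ⟨A, hy, ?_, hpA, hrtA⟩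
    grind
  · have hrtA : G.snd r ∈ A ∧ G.snd t ∈ A := by grind
    have hpqA : G.snd p ∉ A ∧ G.snd q ∉ A := by grind
    refine ⟨(insert y A)ᶜ, by simp, ?_, by simp [*], by simp [*]⟩
    rw [cut_compl]
    grind

-- Uncrossing `X` and `Y` makes every inequality tight, which forces `#(G.cut X) = 5`; but then
-- `#(G.cut (X ∩ Y)) + #(G.cut (X \ Y)) = 8` has the wrong parity.
lemma not_isSplittingObstruction_of_isSplittingObstruction (h : G.IsFourStar y p q r t)
    (hG : G.EdgeConnected 4) (hX : G.IsSplittingObstruction y p q r t X) :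
    ¬ G.IsSplittingObstruction y p r q t Y := by
  intro hY
  obtain ⟨hyX, hX5, ⟨hpX, hqX⟩, hrX, htX⟩ := hX
  obtain ⟨hyY, hY5, ⟨hpY, hrY⟩, hqY, htY⟩ := hY
  have four_le (Z : Set V) (e : E) (he : G.snd e ∈ Z) (hyZ : y ∉ Z) : 4 ≤ #(G.cut Z) :=
    hG Z ⟨_, he⟩ fun hZ => hyZ (hZ ▸ Set.mem_univ y)
  have hinter := four_le (X ∩ Y) p ⟨hpX, hpY⟩ fun hy => hyX hy.1
  have hXY := four_le (X \ Y) q ⟨hqX, hqY⟩ fun hy => hyX hy.1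
  have hYX := four_le (Y \ X) r ⟨hrY, hrX⟩ fun hy => hyY hy.1
  have hout : 4 ≤ #(G.cut (insert y (X ∪ Y))) := by
    refine hG _ (Set.insert_nonempty _ _) fun huniv => ?_
    have ht : G.snd t ∈ insert y (X ∪ Y) := huniv ▸ Set.mem_univ _
    simp [h.snd_ne, htX, htY] at ht
  have hunion := h.card_cut_insert (A := X ∪ Y) (by simp [hyX, hyY])
  have hinsert := h.card_cut_insert hyX
  have hsdiff := h.card_cut_insert (A := X \ Y) (by simp [hyX])
  simp only [Set.mem_union, Set.mem_sdiff, hpX, hpY, hqX, hqY, hrX, hrY, htX, htY,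
    or_true, or_false, or_self, and_true, and_false, not_true, not_false_eq_true, if_true, if_false]
    at hunion hinsert hsdiff
  have hsub := G.card_cut_inter_add_card_cut_union_le X Y
  have hpos := G.card_cut_sdiff_add_card_cut_sdiff_le (insert y X) Y
  rw [Set.insert_sdiff_of_notMem _ hyY, Set.sdiff_insert_of_notMem hyY] at hpos
  have hparity := G.card_cut_union_of_disjoint (Set.disjoint_sdiff_inter (s := X) (t := Y)).symm
  rw [Set.inter_union_sdiff] at hparity
  lia

lemma edgeConnected_contract_completeSplit (h : G.IsFourStar y p q r t) (hG : G.EdgeConnected 4)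
    (hobs : ∀ X, ¬ G.IsSplittingObstruction y p q r t X) {z : V} (hz : z ≠ y) :
    ((G.completeSplit p q r t).contract {y, z}).EdgeConnected 4 := by
  refine edgeConnected_of_notMem none fun B hB hnone => ?_
  rw [contract, cut_map]
  have notMem_of_mem {v : V} (hv : v ∈ ({y, z} : Set V)) : v ∉ contractMap {y, z} ⁻¹' B := by
    rwa [Set.mem_preimage, contractMap_of_mem hv]
  by_contra! hlt
  obtain ⟨X, hX⟩ := h.exists_isSplittingObstruction hG (notMem_of_mem (by simp))
    (hB.preimage (contractMap_surjective (Set.insert_nonempty y {z})))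
    (fun huniv => (huniv ▸ Set.mem_univ z).elim hz (notMem_of_mem (by simp))) hlt
  exact hobs X hX

lemma exists_isNowhereZeroFlow_of_contract_completeSplit (h : G.IsFourStar y p q r t) {z : V}
    {φ : E → M} (hφ : ((G.completeSplit p q r t).contract {y, z}).IsNowhereZeroFlow φ) :
    ∃ φ' : E → M, G.IsNowhereZeroFlow φ' :=
  h.exists_isNowhereZeroFlow_of_completeSplit (hφ.of_contract_pair h.cut_completeSplit_eq_empty)

lemma exists_edgeConnected_contract_completeSplit (h : G.IsFourStar y p q r t)
    (hG : G.EdgeConnected 4) {z : V} (hz : z ≠ y) : ∃ p q r t, G.IsFourStar y p q r t ∧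
      ((G.completeSplit p q r t).contract {y, z}).EdgeConnected 4 := by
  by_cases hobs : ∃ X, G.IsSplittingObstruction y p q r t X
  · obtain ⟨X, hX⟩ := hobs
    exact ⟨p, r, q, t, h.swap, h.swap.edgeConnected_contract_completeSplit hG
      (fun _ => h.not_isSplittingObstruction_of_isSplittingObstruction hG hX) hz⟩
  · exact ⟨p, q, r, t, h, h.edgeConnected_contract_completeSplit hG (not_exists.1 hobs) hz⟩

end IsFourStar

end FourStar

section Attach

variable {V E M : Type*} [Fintype E] [AddCommGroup M] {G : Pseudograph V E} {k n : ℕ}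

/-- `G` together with a new vertex `none` joined to `z` by `n` parallel edges. -/
def attach (G : Pseudograph V E) (z : V) (n : ℕ) : Pseudograph (Option V) (E ⊕ Fin n) where
  fst := Sum.elim (fun e => some (G.fst e)) fun _ => none
  snd := Sum.elim (fun e => some (G.snd e)) fun _ => some z

lemma mem_cut_attach_inl {z : V} {B : Set (Option V)} {e : E} :
    Sum.inl e ∈ (G.attach z n).cut B ↔ e ∈ G.cut (some ⁻¹' B) := by
  simp only [mem_cut, attach, Sum.elim_inl, Set.mem_preimage]

lemma mem_cut_attach_inr {z : V} {B : Set (Option V)} {i : Fin n} :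
    Sum.inr i ∈ (G.attach z n).cut B ↔ ¬ (none ∈ B ↔ some z ∈ B) := by
  simp only [mem_cut, attach, Sum.elim_inr]

lemma card_cut_attach_singleton_none (G : Pseudograph V E) (z : V) (n : ℕ) :
    #((G.attach z n).cut {none}) = n := by
  have hcut : (G.attach z n).cut {none} = univ.map Function.Embedding.inr := by
    ext (e | i) <;> simp [mem_cut, attach]
  rw [hcut, card_map, card_univ, Fintype.card_fin]

lemma EdgeConnected.attach (h : G.EdgeConnected k) (hkn : k ≤ n) (z : V) :
    (G.attach z n).EdgeConnected k := by
  refine edgeConnected_of_notMem none fun B hB hnone => ?_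
  by_cases hz : some z ∈ B
  · have hsub : univ.map Function.Embedding.inr ⊆ (G.attach z n).cut B := fun e he => by
      obtain ⟨i, -, rfl⟩ := Finset.mem_map.1 he
      exact mem_cut_attach_inr.2 (by simp [hnone, hz])
    calc k ≤ n := hkn
      _ = #(univ.map (Function.Embedding.inr : Fin n ↪ E ⊕ Fin n)) := by simp
      _ ≤ #((G.attach z n).cut B) := card_le_card hsub
  · have hne : (some ⁻¹' B).Nonempty := by
      obtain ⟨_ | v, hv⟩ := hB
      · exact absurd hv hnone
      · exact ⟨v, hv⟩
    have hsub : (G.cut (some ⁻¹' B)).map Function.Embedding.inl ⊆ (G.attach z n).cut B :=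
      fun e he => by
        obtain ⟨e', he', rfl⟩ := Finset.mem_map.1 he
        exact mem_cut_attach_inl.2 he'
    calc k ≤ #(G.cut (some ⁻¹' B)) := h _ hne fun huniv =>
          hz (Set.eq_univ_iff_forall.1 huniv z)
      _ = #((G.cut (some ⁻¹' B)).map (Function.Embedding.inl : E ↪ E ⊕ Fin n)) :=
        (card_map _).symm
      _ ≤ #((G.attach z n).cut B) := card_le_card hsub

lemma netOutflow_attach (G : Pseudograph V E) (z : V) (φ : E ⊕ Fin n → M) (B : Set (Option V)) :
    (G.attach z n).netOutflow φ B = G.netOutflow (φ ∘ Sum.inl) (some ⁻¹' B) +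
      ∑ i, (B.indicator (fun _ => φ (Sum.inr i)) none -
        B.indicator (fun _ => φ (Sum.inr i)) (some z)) :=
  Fintype.sum_sum_type _

lemma netOutflow_attach_singleton_none (G : Pseudograph V E) (z : V) (φ : E ⊕ Fin n → M) :
    (G.attach z n).netOutflow φ {none} = ∑ i, φ (Sum.inr i) := by
  simp [netOutflow, attach]

lemma IsNowhereZeroFlow.of_attach {z : V} {φ : E ⊕ Fin n → M}
    (h : (G.attach z n).IsNowhereZeroFlow φ) : G.IsNowhereZeroFlow (φ ∘ Sum.inl) := by
  have hsum := h.netOutflow_eq_zero none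
  rw [netOutflow_attach_singleton_none] at hsum
  refine ⟨fun e => h.ne_zero (Sum.inl e), fun v => ?_⟩
  have hpre : some ⁻¹' ({some v} : Set (Option V)) = {v} := by ext; simp
  rw [← h.netOutflow_eq_zero (some v), netOutflow_attach, hpre, left_eq_add]
  by_cases hv : z = v <;> simp [hv, hsum]

end Attach

section Main

variable {V : Type u} {E : Type v} [Fintype E] {G : Pseudograph V E} {A : Set V}

lemma hasNowhereZeroThreeFlow_of_card_cut_singleton_eq_four (hG : G.EdgeConnected 4)
    {y : V} (hy : #(G.cut {y}) = 4)
    (ih : ∀ (H : Pseudograph V E) (A : Set V), A.Nontrivial → (H.contract A).EdgeConnected 4 →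
      (H.contract A).HasNowhereZeroThreeFlow) :
    G.HasNowhereZeroThreeFlow := by
  classical
  obtain ⟨R, p, q, r, t, hstar⟩ := exists_isFourStar_reverse hy
  have hz : (G.reverse R).snd p ≠ y := hstar.snd_ne (by simp)
  have hrev : (G.reverse R).EdgeConnected 4 := by simpa only [EdgeConnected, cut_reverse] using hG
  obtain ⟨p', q', r', t', hstar', hconn⟩ :=
    hstar.exists_edgeConnected_contract_completeSplit hrev hz
  obtain ⟨φ, hφ⟩ := ih _ _ (Set.nontrivial_pair hz.symm) hconn
  obtain ⟨φ', hφ'⟩ := hstar'.exists_isNowhereZeroFlow_of_contract_completeSplit hφ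
  exact ⟨_, hφ'.of_reverse⟩

variable [Finite V]

lemma FiveConnectedExtendability.hasNowhereZeroThreeFlow_of_edgeConnected_five
    (hext : FiveConnectedExtendability.{u, v}) (hG : G.EdgeConnected 5) :
    G.HasNowhereZeroThreeFlow := by
  rcases isEmpty_or_nonempty V with hV | ⟨⟨z⟩⟩
  · exact ⟨0, fun e => hV.elim (G.fst e), hV.elim⟩
  -- Four units out and one unit in is balanced modulo `3`.
  let c : Fin 5 → ZMod 3 := ![1, 1, 1, 1, -1]
  have hc : (∀ i, c i ≠ 0) ∧ ∑ i, c i = 0 := by decide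
  let φ₀ : E ⊕ Fin 5 → ZMod 3 := Sum.elim 1 c
  have hφ₀ : ∀ e, φ₀ e ≠ 0 := Sum.rec (fun _ => one_ne_zero) hc.1
  have hbal : (G.attach z 5).netOutflow φ₀ {none} = 0 :=
    (netOutflow_attach_singleton_none G z φ₀).trans hc.2
  obtain ⟨φ, hφ, -⟩ := hext _ _ (G.attach z 5) none (hG.attach le_rfl z)
    (card_cut_attach_singleton_none G z 5) φ₀ hφ₀ hbal
  exact ⟨_, hφ.of_attach⟩

lemma FiveConnectedExtendability.hasNowhereZeroThreeFlow_of_contract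
    (hext : FiveConnectedExtendability.{u, v}) (hG : G.EdgeConnected 4) (hA : G.IsCriticalSet 4 A)
    (h : (G.contract A).HasNowhereZeroThreeFlow) : G.HasNowhereZeroThreeFlow := by
  obtain ⟨φ₁, hφ₁⟩ := h
  have hcard := hA.card_cut_eq hG
  obtain ⟨e₀, he₀⟩ : (G.cut A).Nonempty := card_pos.1 (by lia)
  have he₀' : e₀ ∈ (G.contract Aᶜ).cut {none} := by rwa [cut_contract_compl_none]
  have hfive : #(((G.contract Aᶜ).doubleEdge e₀).cut {none}) = 5 := by
    rw [card_cut_doubleEdge he₀', cut_contract_compl_none, hcard]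
  have hextAt : (G.contract Aᶜ).ThreeFlowExtendableAt none := .of_doubleEdge he₀'
    (hext _ _ _ none (hA.edgeConnected_doubleEdge_contract_compl hG he₀) hfive)
  have hbal : (G.contract Aᶜ).netOutflow φ₁ {none} = 0 := by
    rw [contract, netOutflow_map, contractMap_preimage_none, netOutflow_compl,
      hφ₁.netOutflow_of_contract, neg_zero]
  obtain ⟨φ₂, hφ₂, hagree⟩ := hextAt φ₁ hφ₁.ne_zero hbal
  rw [cut_contract_compl_none] at hagree
  exact hφ₁.exists_of_contract_of_contract_compl hφ₂ hagree

theorem FiveConnectedExtendability.hasNowhereZeroThreeFlow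
    (hext : FiveConnectedExtendability.{u, v}) (G : Pseudograph V E) (hG : G.EdgeConnected 4) :
    G.HasNowhereZeroThreeFlow := by
  induction hn : Nat.card V using Nat.strong_induction_on generalizing V with
  | _ n ih =>
  subst hn
  have ih_contract (H : Pseudograph V E) (A : Set V) (hA : A.Nontrivial)
      (hH : (H.contract A).EdgeConnected 4) : (H.contract A).HasNowhereZeroThreeFlow :=
    ih _ (card_option_compl_lt hA) (H.contract A) hH rfl
  by_cases hfive : G.EdgeConnected 5
  · exact hext.hasNowhereZeroThreeFlow_of_edgeConnected_five hfive
  obtain ⟨A, hA⟩ := exists_isCriticalSet hfive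
  rcases hA.nonempty.exists_eq_singleton_or_nontrivial with ⟨y, rfl⟩ | hnontrivial
  · exact hasNowhereZeroThreeFlow_of_card_cut_singleton_eq_four hG (hA.card_cut_eq hG) ih_contract
  · exact hext.hasNowhereZeroThreeFlow_of_contract hG hA
      (ih_contract G A hnontrivial (hG.map (contractMap_surjective hA.nonempty)))

end Main

end Pseudograph

namespace Multigraph

/-- The underlying pseudograph. -/
@[simps]
def toPseudograph {V E : Type} (G : Multigraph V E) : Pseudograph V E where
  fst := G.fst
  snd := G.snd

section Orientations

/-- The `ℤ₃`-valued assignment of an orientation: `1` on the edges directed from `fst` to `snd`, and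
`-1` on the others. -/
def orientationFlow {E : Type} (D : E → Bool) (e : E) : ZMod 3 :=
  bif D e then 1 else -1

lemma orientationFlow_ne_zero {E : Type} (D : E → Bool) (e : E) : orientationFlow D e ≠ 0 := by
  cases h : D e <;> simp [orientationFlow, h]

lemma orientationFlow_apply_inj {E : Type} {D D' : E → Bool} {e : E} :
    orientationFlow D e = orientationFlow D' e ↔ D e = D' e := by
  cases h : D e <;> cases h' : D' e <;> simp only [orientationFlow, h, h'] <;> decide

lemma exists_orientationFlow_eq {E : Type} {φ : E → ZMod 3} (hφ : ∀ e, φ e ≠ 0) :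
    ∃ D, orientationFlow D = φ := by
  have eq_bif (c : ZMod 3) (hc : c ≠ 0) : (bif decide (c = 1) then 1 else -1) = c := by
    revert c
    decide
  exact ⟨fun e => decide (φ e = 1), funext fun e => eq_bif (φ e) (hφ e)⟩

end Orientations

section Bridge

variable {V E : Type} [DecidableEq V] [Fintype E] (G : Multigraph V E)

lemma cut_toPseudograph (A : Finset V) : G.toPseudograph.cut A = G.cut A := by
  ext e
  simp [Pseudograph.mem_cut, cut]

lemma degree_eq_card_cut_toPseudograph (v : V) : G.degree v = #(G.toPseudograph.cut {v}) := by
  refine congrArg card (Finset.ext fun e => ?_)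
  have := G.no_loop e
  grind [Incident, Pseudograph.mem_cut, toPseudograph]

lemma edgeConnected_toPseudograph_iff [Fintype V] {k : ℕ} :
    G.toPseudograph.EdgeConnected k ↔ G.EdgeConnected k := by
  refine ⟨fun h A hne huniv => ?_, fun h A hne huniv => ?_⟩
  · rw [← cut_toPseudograph]
    exact h A (coe_nonempty.2 hne) (coe_eq_univ.not.2 huniv)
  · lift A to Finset V using A.toFinite
    rw [cut_toPseudograph]
    exact h A (coe_nonempty.1 hne) (coe_eq_univ.not.1 huniv)

lemma outDeg_sub_inDeg_eq_netOutflow (D : E → Bool) (v : V) :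
    ((G.outDeg D v - G.inDeg D v : ℤ) : ZMod 3) =
      G.toPseudograph.netOutflow (orientationFlow D) {v} := by
  simp only [outDeg, inDeg, card_filter, Pseudograph.netOutflow]
  push_cast
  rw [← sum_sub_distrib]
  refine sum_congr rfl fun e _ => ?_
  cases h : D e
  all_goals
    simp only [tail, head, orientationFlow, h, Bool.false_eq_true, if_true, if_false, cond_true,
      cond_false, Set.indicator_apply, Set.mem_singleton_iff, toPseudograph_fst, toPseudograph_snd]
  split_ifs <;> rfl

lemma isMod3Orientation_iff_isNowhereZeroFlow {D : E → Bool} :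
    G.IsMod3Orientation D ↔ G.toPseudograph.IsNowhereZeroFlow (orientationFlow D) := by
  simp only [IsMod3Orientation, outDeg_sub_inDeg_eq_netOutflow]
  exact ⟨fun h => ⟨orientationFlow_ne_zero D, h⟩, fun h => h.netOutflow_eq_zero⟩

variable {G} in
lemma Mod3ExtendableAt.threeFlowExtendableAt {x : V} (h : G.Mod3ExtendableAt x) :
    G.toPseudograph.ThreeFlowExtendableAt x := by
  intro φ₀ hφ₀ hbal
  obtain ⟨D₀, rfl⟩ := exists_orientationFlow_eq hφ₀
  obtain ⟨D, hagree, hD⟩ := h D₀ (by rwa [outDeg_sub_inDeg_eq_netOutflow])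
  refine ⟨orientationFlow D, G.isMod3Orientation_iff_isNowhereZeroFlow.1 hD, fun e he => ?_⟩
  refine orientationFlow_apply_inj.2 (hagree e ?_)
  simp only [Pseudograph.mem_cut, toPseudograph_fst, toPseudograph_snd,
    Set.mem_singleton_iff] at he
  rw [Incident]
  tauto

lemma mod3Orientable_of_hasNowhereZeroThreeFlow (h : G.toPseudograph.HasNowhereZeroThreeFlow) :
    G.Mod3Orientable := by
  obtain ⟨φ, hφ⟩ := h
  obtain ⟨D, rfl⟩ := exists_orientationFlow_eq hφ.ne_zero
  exact ⟨D, G.isMod3Orientation_iff_isNowhereZeroFlow.2 hφ⟩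

end Bridge

end Multigraph

namespace Pseudograph

section Loops

variable {V E : Type} {G : Pseudograph V E}

/-- `G` without its loops, as a loopless multigraph. -/
def deleteLoops (G : Pseudograph V E) : Multigraph V {e // G.fst e ≠ G.snd e} where
  fst e := G.fst e
  snd e := G.snd e
  no_loop e := e.2

variable [Fintype E] [Fintype {e // G.fst e ≠ G.snd e}]

lemma mem_cut_deleteLoops {A : Set V} {e : {e // G.fst e ≠ G.snd e}} :
    e ∈ G.deleteLoops.toPseudograph.cut A ↔ e.1 ∈ G.cut A := by
  simp only [mem_cut, deleteLoops, Multigraph.toPseudograph]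

lemma card_cut_deleteLoops (A : Set V) : #(G.deleteLoops.toPseudograph.cut A) = #(G.cut A) := by
  rw [← card_map (Function.Embedding.subtype _)]
  refine congrArg card (Finset.ext fun e => ?_)
  simp only [Finset.mem_map, mem_cut_deleteLoops, Function.Embedding.subtype_apply,
    Subtype.exists, exists_and_left, exists_prop, exists_eq_right_right, and_iff_left_iff_imp]
  exact fst_ne_snd_of_mem_cut

lemma netOutflow_deleteLoops {M : Type*} [AddCommGroup M] (φ : E → M) (A : Set V) :
    G.deleteLoops.toPseudograph.netOutflow (fun e => φ e) A = G.netOutflow φ A := by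
  refine Fintype.sum_of_injective _ Subtype.val_injective _ _ (fun e he => ?_) fun e => rfl
  have hloop : G.fst e = G.snd e := by simpa using he
  rw [hloop, sub_self]

lemma ThreeFlowExtendableAt.of_deleteLoops {x : V}
    (h : G.deleteLoops.toPseudograph.ThreeFlowExtendableAt x) : G.ThreeFlowExtendableAt x := by
  classical
  intro φ₀ hφ₀ hbal
  obtain ⟨φ', hφ', hagree⟩ :=
    h (fun e => φ₀ e) (fun e => hφ₀ e) (by rw [netOutflow_deleteLoops, hbal])
  let φ : E → ZMod 3 := fun e => if he : G.fst e ≠ G.snd e then φ' ⟨e, he⟩ else 1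
  have hφ : (fun e : {e // G.fst e ≠ G.snd e} => φ e) = φ' := funext fun e => dif_pos e.2
  refine ⟨φ, ⟨fun e => ?_, fun v => ?_⟩, fun e he => ?_⟩
  · by_cases he : G.fst e ≠ G.snd e
    · simpa only [φ, dif_pos he] using hφ'.ne_zero ⟨e, he⟩
    · simpa only [φ, dif_neg he] using one_ne_zero
  · rw [← netOutflow_deleteLoops, hφ, hφ'.netOutflow_eq_zero]
  · have hne := fst_ne_snd_of_mem_cut he
    exact (dif_pos hne).trans (hagree ⟨e, hne⟩ (mem_cut_deleteLoops.2 he))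

end Loops

theorem fiveConnectedExtendability_of_mod3ExtendableAt
    (h : ∀ (V E : Type) [Fintype V] [DecidableEq V] [Fintype E] [DecidableEq E]
      (G : Multigraph V E) (x : V), G.EdgeConnected 5 → G.degree x = 5 → G.Mod3ExtendableAt x) :
    FiveConnectedExtendability.{0, 0} := by
  classical
  intro V E _ _ G x hG hx
  have := Fintype.ofFinite V
  have hconn : G.deleteLoops.toPseudograph.EdgeConnected 5 := by
    simpa only [EdgeConnected, card_cut_deleteLoops] using hG
  refine .of_deleteLoops (h _ _ G.deleteLoops x ?_ ?_).threeFlowExtendableAt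
  · rwa [← Multigraph.edgeConnected_toPseudograph_iff]
  · rw [Multigraph.degree_eq_card_cut_toPseudograph, card_cut_deleteLoops, hx]

end Pseudograph

namespace Multigraph

/-- If every 5-edge-connected graph with a degree-5 vertex is mod-3-extendable
at that vertex, then every 4-edge-connected graph admits a mod 3-orientation
(equivalently, a nowhere-zero 3-flow). -/
theorem stmt_14
    (hyp : ∀ (V E : Type) [Fintype V] [DecidableEq V] [Fintype E] [DecidableEq E] (G : Multigraph V E) (x : V),
      G.EdgeConnected 5 → G.degree x = 5 → G.Mod3ExtendableAt x)
    {V E : Type} [Fintype V] [DecidableEq V] [Fintype E] [DecidableEq E] (G : Multigraph V E) (h4 : G.EdgeConnected 4) :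
    G.Mod3Orientable := by
  have hext := Pseudograph.fiveConnectedExtendability_of_mod3ExtendableAt hyp
  have hconn : G.toPseudograph.EdgeConnected 4 := G.edgeConnected_toPseudograph_iff.2 h4
  exact G.mod3Orientable_of_hasNowhereZeroThreeFlow (hext.hasNowhereZeroThreeFlow _ hconn)

end Multigraph
end

section
/- Suppose every Z_3-reduced graph has minimum degree at most 4. Then every 4-edge-connected graph admits a mod 3-orientation (equivalently, a nowhere-zero 3-flow). -/
open Finset

namespace Multigraph

variable {V E : Type} [Fintype V] [DecidableEq V] [Fintype E] [DecidableEq E]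

/-- The subgraph of `G` with vertex set `S` and edge set `F` (all edges of `F`
having both endpoints in `S`). -/
def subgraphOn (G : Multigraph V E) (S : Finset V) (F : Finset E)
    (hF : ∀ e ∈ F, G.fst e ∈ S ∧ G.snd e ∈ S) :
    Multigraph {v : V // v ∈ S} {e : E // e ∈ F} where
  fst e := ⟨G.fst e.1, (hF e.1 e.2).1⟩
  snd e := ⟨G.snd e.1, (hF e.1 e.2).2⟩
  no_loop e h := G.no_loop e.1 (congrArg Subtype.val h)

/-- `G` is `ℤ₃`-reduced: it contains no `ℤ₃`-connected subgraph with at least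
two vertices. -/
def Z3Reduced (G : Multigraph V E) : Prop :=
  ∀ (S : Finset V) (F : Finset E) (hF : ∀ e ∈ F, G.fst e ∈ S ∧ G.snd e ∈ S),
    2 ≤ S.card → ¬ (G.subgraphOn S F hF).Z3Connected

end Multigraph

/-!
Induct on the number of vertices. A `ℤ₃`-connected subgraph may be contracted: edge-connectivity
survives, and a nowhere-zero flow of the contraction, read on the original edges, can be repaired
inside the subgraph. If the graph is reduced and `k`-edge-connected, with `k = 4` or any other
positive even number, then some vertex `v` has degree exactly `k`, so the edges at `v` can be split
off in pairs while the other vertices stay `k`-edge-connected to each other; a nowhere-zero flow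
then lifts back through each splitting.

The splitting step is Lovász's argument. Fix an edge `a` at `v`. If it can be paired with no other
edge, then for every other edge at `v` there is a set avoiding `v`, containing the far ends of both
and having cut at most `k + 1`. Each such set receives at most half of the edges at `v`, and all of
them receive `a`, so a minimal covering family has at least three members, each with a private edge.
Three of them contradict the inequality
`d(X ∩ Y ∩ Z) + d(X \ (Y ∪ Z)) + d(Y \ (X ∪ Z)) + d(Z \ (X ∪ Y)) + 2 ≤ d(X) + d(Y) + d(Z)`
as soon as `k ≥ 2`.
-/

namespace Multigraph

section Flow

variable {α β ε M : Type*} [Fintype ε] [AddCommGroup M]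

/-- The boundary of the edge weighting `φ` in the directed multigraph, loops allowed, whose edge `e`
runs from `s e` to `t e`: its value at a vertex is the outflow minus the inflow there. -/
noncomputable def netFlow (s t : ε → α) (φ : ε → M) : α →₀ M :=
  ∑ e, (Finsupp.single (s e) (φ e) - Finsupp.single (t e) (φ e))

variable (M) in
/-- Existence of a nowhere-zero `M`-valued flow in the multigraph with edges from `s e` to `t e`. -/
def HasNowhereZeroFlow (s t : ε → α) : Prop :=
  ∃ φ : ε → M, (∀ e, φ e ≠ 0) ∧ netFlow s t φ = 0

theorem netFlow_apply [DecidableEq α] (s t : ε → α) (φ : ε → M) (v : α) :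
    netFlow s t φ v = ∑ e, ((if s e = v then φ e else 0) - if t e = v then φ e else 0) := by
  simp only [netFlow, Finsupp.finsetSum_apply, Finsupp.sub_apply, Finsupp.single_apply]

theorem netFlow_comp (p : α → β) (s t : ε → α) (φ : ε → M) :
    netFlow (p ∘ s) (p ∘ t) φ = (netFlow s t φ).mapDomain p := by
  simp only [netFlow, Finsupp.mapDomain_finsetSum, Finsupp.mapDomain_sub, Finsupp.mapDomain_single,
    Function.comp_apply]

theorem netFlow_comp_apply {p : α → β} {v : α} (hp : ∀ u, p u = p v → u = v) (s t : ε → α)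
    (φ : ε → M) : netFlow (p ∘ s) (p ∘ t) φ (p v) = netFlow s t φ v := by
  classical
  have hp' : ∀ u, p u = p v ↔ u = v := fun u => ⟨hp u, congrArg p⟩
  simp only [netFlow_apply, Function.comp_apply, hp']

theorem netFlow_sub (s t : ε → α) (φ ψ : ε → M) :
    netFlow s t (φ - ψ) = netFlow s t φ - netFlow s t ψ := by
  simp only [netFlow, Pi.sub_apply, Finsupp.single_sub, ← Finset.sum_sub_distrib]
  exact Finset.sum_congr rfl fun e _ => by abel

theorem sum_netFlow (s t : ε → α) (φ : ε → M) {S : Finset α}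
    (hS : ∀ v ∉ S, netFlow s t φ v = 0) : ∑ v ∈ S, netFlow s t φ v = 0 := by
  have hsupp : (netFlow s t φ).support ⊆ S := Finsupp.support_subset_iff.mpr fun v hv => hS v hv
  calc ∑ v ∈ S, netFlow s t φ v = Finsupp.liftAddHom (fun _ => AddMonoidHom.id M) (netFlow s t φ) :=
        (Finsupp.sum_of_support_subset _ hsupp (fun _ x => x) fun _ _ => rfl).symm
    _ = 0 := by
        rw [netFlow, map_sum]
        simp only [map_sub, Finsupp.liftAddHom_apply_single, AddMonoidHom.id_apply, sub_self,
          Finset.sum_const_zero]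

theorem netFlow_subtype (s t : ε → α) (φ : ε → M) (P : ε → Prop) [Fintype {e // P e}]
    (h : ∀ e, ¬P e → φ e = 0 ∨ s e = t e) :
    netFlow (fun e : {e // P e} => s e) (fun e => t e) (fun e => φ e) = netFlow s t φ := by
  classical
  rw [netFlow, netFlow, ← Finset.sum_subtype (univ.filter P) (by simp)
    (fun e => Finsupp.single (s e) (φ e) - Finsupp.single (t e) (φ e))]
  refine Finset.sum_subset (Finset.subset_univ _) fun e _ he => ?_
  rcases h e (by simpa using he) with h0 | hst <;> simp [*]

theorem HasNowhereZeroFlow.comp {s t : ε → α} (h : HasNowhereZeroFlow M s t) (p : α → β) :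
    HasNowhereZeroFlow M (p ∘ s) (p ∘ t) := by
  obtain ⟨φ, hφ, hflow⟩ := h
  exact ⟨φ, hφ, by rw [netFlow_comp, hflow, Finsupp.mapDomain_zero]⟩

theorem HasNowhereZeroFlow.of_subsingleton [Nontrivial M] [Subsingleton α] (s t : ε → α) :
    HasNowhereZeroFlow M s t := by
  obtain ⟨x, hx⟩ := exists_ne (0 : M)
  refine ⟨fun _ => x, fun _ => hx, Finset.sum_eq_zero fun e _ => ?_⟩
  rw [Subsingleton.elim (s e) (t e), sub_self]

theorem HasNowhereZeroFlow.of_subtype_ne [Nontrivial M] {s t : ε → α}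
    [Fintype {e // s e ≠ t e}]
    (h : HasNowhereZeroFlow M (fun e : {e // s e ≠ t e} => s e) (fun e => t e)) :
    HasNowhereZeroFlow M s t := by
  classical
  obtain ⟨φ, hφ, hflow⟩ := h
  obtain ⟨x, hx⟩ := exists_ne (0 : M)
  refine ⟨fun e => if he : s e ≠ t e then φ ⟨e, he⟩ else x, fun e => ?_, ?_⟩
  · by_cases he : s e ≠ t e
    · simpa only [dif_pos he] using hφ ⟨e, he⟩
    · simpa only [dif_neg he] using hx
  · rw [← netFlow_subtype s t _ (fun e => s e ≠ t e) fun e he => Or.inr (not_not.mp he), ← hflow]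
    congr 1
    exact funext fun e => dif_pos e.2

theorem HasNowhereZeroFlow.of_sym2_eq {s t s' t' : ε → α} (h : HasNowhereZeroFlow M s' t')
    (hst : ∀ e, s(s' e, t' e) = s(s e, t e)) : HasNowhereZeroFlow M s t := by
  obtain ⟨φ, hφ, hflow⟩ := h
  have edgewise : ∀ e, ∃ x : M, x ≠ 0 ∧ Finsupp.single (s e) x - Finsupp.single (t e) x =
      Finsupp.single (s' e) (φ e) - Finsupp.single (t' e) (φ e) := by
    intro e
    rcases Sym2.eq_iff.mp (hst e) with ⟨hs, ht⟩ | ⟨hs, ht⟩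
    · exact ⟨φ e, hφ e, by rw [hs, ht]⟩
    · refine ⟨-φ e, neg_ne_zero.mpr (hφ e), ?_⟩
      rw [hs, ht, Finsupp.single_neg, Finsupp.single_neg]
      abel
  choose ψ hψ hψφ using edgewise
  exact ⟨ψ, hψ, hflow ▸ Finset.sum_congr rfl fun e _ => hψφ e⟩

end Flow

section EdgeCut

variable {α β ε : Type*} [Fintype ε]

open scoped Classical in
/-- The edges with exactly one end in `X`. -/
noncomputable def edgeCut (s t : ε → α) (X : Set α) : Finset ε :=
  {e | ¬(s e ∈ X ↔ t e ∈ X)}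

theorem mem_edgeCut {s t : ε → α} {X : Set α} {e : ε} :
    e ∈ edgeCut s t X ↔ ¬(s e ∈ X ↔ t e ∈ X) := by
  simp only [edgeCut, Finset.mem_filter_univ]

theorem edgeCut_compl (s t : ε → α) (X : Set α) : edgeCut s t Xᶜ = edgeCut s t X := by
  ext e
  simp only [mem_edgeCut, Set.mem_compl_iff, not_iff_not]

theorem edgeCut_comp (p : α → β) (s t : ε → α) (X : Set β) :
    edgeCut (p ∘ s) (p ∘ t) X = edgeCut s t (p ⁻¹' X) := rfl

theorem edgeCut_congr_of_sym2_eq {s t s' t' : ε → α} (hst : ∀ e, s(s' e, t' e) = s(s e, t e))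
    (X : Set α) : edgeCut s' t' X = edgeCut s t X := by
  ext e
  rw [mem_edgeCut, mem_edgeCut, not_iff_not]
  rcases Sym2.eq_iff.mp (hst e) with ⟨hs, ht⟩ | ⟨hs, ht⟩
  · rw [hs, ht]
  · rw [hs, ht]
    exact iff_comm

/-- Every cut separating two vertices of `U` has at least `k` edges; for `U = Set.univ` this is
`k`-edge-connectivity. -/
def EdgeConnectedOn (s t : ε → α) (U : Set α) (k : ℕ) : Prop :=
  ∀ X : Set α, (U ∩ X).Nonempty → (U \ X).Nonempty → k ≤ #(edgeCut s t X)

theorem EdgeConnectedOn.mono {s t : ε → α} {U U' : Set α} {k : ℕ}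
    (h : EdgeConnectedOn s t U k) (hU : U' ⊆ U) : EdgeConnectedOn s t U' k :=
  fun X hX hX' => h X (hX.mono (Set.inter_subset_inter_left X hU))
    (hX'.mono (Set.sdiff_subset_sdiff_left hU))

theorem EdgeConnectedOn.comp_surjective {s t : ε → α} {k : ℕ}
    (h : EdgeConnectedOn s t Set.univ k) {p : α → β} (hp : p.Surjective) :
    EdgeConnectedOn (p ∘ s) (p ∘ t) Set.univ k := by
  rintro X ⟨x, -, hx⟩ ⟨y, -, hy⟩
  obtain ⟨x, rfl⟩ := hp x
  obtain ⟨y, rfl⟩ := hp y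
  exact h (p ⁻¹' X) ⟨x, trivial, hx⟩ ⟨y, trivial, hy⟩

theorem EdgeConnectedOn.of_comp_injective {s t : ε → α} {k : ℕ} {p : α → β} (hp : p.Injective)
    (h : EdgeConnectedOn (p ∘ s) (p ∘ t) (Set.range p) k) : EdgeConnectedOn s t Set.univ k := by
  rintro X ⟨x, -, hx⟩ ⟨y, -, hy⟩
  have hcut := h (p '' X) ⟨p x, ⟨x, rfl⟩, ⟨x, hx, rfl⟩⟩
    ⟨p y, ⟨y, rfl⟩, fun hmem => hy (hp.mem_set_image.mp hmem)⟩
  rwa [edgeCut_comp, Set.preimage_image_eq X hp] at hcut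

theorem card_edgeCut_insert {s t : ε → α} {v : α} (hs : ∀ e, s e ≠ v) {X : Set α} (hv : v ∉ X)
    [DecidablePred fun e => t e = v ∧ s e ∈ X] [DecidablePred fun e => t e = v ∧ s e ∉ X] :
    #(edgeCut s t (insert v X)) + #{e | t e = v ∧ s e ∈ X} =
      #(edgeCut s t X) + #{e | t e = v ∧ s e ∉ X} := by
  classical
  simp only [edgeCut, Finset.card_filter, ← Finset.sum_add_distrib]
  refine Finset.sum_congr rfl fun e _ => ?_
  by_cases ht : t e = v <;> by_cases hsX : s e ∈ X <;> simp [ht, hsX, hs e, hv]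

theorem card_edgeCut_venn_le {s t : ε → α} {X Y Z : Set α} {a : ε} (hs : s a ∈ X ∩ Y ∩ Z)
    (ht : t a ∉ X ∪ Y ∪ Z) :
    #(edgeCut s t (X ∩ Y ∩ Z)) + #(edgeCut s t (X \ (Y ∪ Z))) + #(edgeCut s t (Y \ (X ∪ Z))) +
      #(edgeCut s t (Z \ (X ∪ Y))) + 2 ≤
    #(edgeCut s t X) + #(edgeCut s t Y) + #(edgeCut s t Z) := by
  classical
  have h2 : 2 = ∑ e, if e = a then 2 else 0 := by simp
  rw [h2]
  simp only [edgeCut, Finset.card_filter, ← Finset.sum_add_distrib]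
  refine Finset.sum_le_sum fun e _ => ?_
  by_cases ha : e = a
  · subst ha
    simp only [Set.mem_inter_iff, Set.mem_union, not_or] at hs ht
    simp [hs, ht]
  · by_cases hsX : s e ∈ X <;> by_cases hsY : s e ∈ Y <;> by_cases hsZ : s e ∈ Z <;>
      by_cases htX : t e ∈ X <;> by_cases htY : t e ∈ Y <;> by_cases htZ : t e ∈ Z <;>
      simp [ha, hsX, hsY, hsZ, htX, htY, htZ]

end EdgeCut

section SplitOff

variable {α ε M : Type*}

/-- The new terminal ends after splitting off the pair of edges `a`, `b` with a common terminal
vertex: `a` becomes an edge from `s a` to `s b`, and `b` is kept as a loop at `s b`, so that the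
type of edges does not change. -/
def splitOff [DecidableEq ε] (s t : ε → α) (a b : ε) (e : ε) : α :=
  if e = a ∨ e = b then s b else t e

variable [Fintype ε]

theorem HasNowhereZeroFlow.of_splitOff [DecidableEq ε] [AddCommGroup M] {s t : ε → α} {a b : ε}
    (hab : a ≠ b) (ht : t a = t b) (h : HasNowhereZeroFlow M s (splitOff s t a b)) :
    HasNowhereZeroFlow M s t := by
  obtain ⟨φ, hφ, hflow⟩ := h
  refine ⟨Function.update φ b (-φ a), fun e => ?_, ?_⟩
  · rcases eq_or_ne e b with rfl | he <;> simp [*]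
  · have hrest : ∀ e ∈ univ \ {a, b},
        Finsupp.single (s e) (Function.update φ b (-φ a) e) -
          Finsupp.single (t e) (Function.update φ b (-φ a) e) =
        Finsupp.single (s e) (φ e) - Finsupp.single (splitOff s t a b e) (φ e) := by
      intro e he
      simp only [Finset.mem_sdiff, Finset.mem_insert, Finset.mem_singleton, not_or] at he
      simp [splitOff, he.2]
    rw [← hflow, netFlow, netFlow, ← Finset.sum_sdiff (Finset.subset_univ {a, b}),
      ← Finset.sum_sdiff (Finset.subset_univ {a, b}), Finset.sum_congr rfl hrest,
      Finset.sum_pair hab, Finset.sum_pair hab]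
    simp [splitOff, hab, ht]
    abel

theorem card_edgeCut_le_splitOff_add_two [DecidableEq ε] (s t : ε → α) (a b : ε) (X : Set α) :
    #(edgeCut s t X) ≤ #(edgeCut s (splitOff s t a b) X) + 2 := by
  calc #(edgeCut s t X) ≤ #(edgeCut s (splitOff s t a b) X ∪ {a, b}) := by
        refine Finset.card_le_card fun e he => ?_
        by_cases hab : e = a ∨ e = b
        · exact Finset.mem_union_right _ (by simpa using hab)
        · exact Finset.mem_union_left _ (by simpa [mem_edgeCut, splitOff, hab] using he)
    _ ≤ #(edgeCut s (splitOff s t a b) X) + 2 :=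
        (Finset.card_union_le _ _).trans (Nat.add_le_add_left Finset.card_le_two _)

theorem mem_edgeCut_of_card_splitOff_lt [DecidableEq ε] {s t : ε → α} {a b : ε}
    (ht : t a = t b) {X : Set α}
    (hlt : #(edgeCut s (splitOff s t a b) X) < #(edgeCut s t X)) :
    a ∈ edgeCut s t X ∧ b ∈ edgeCut s t X := by
  contrapose! hlt
  refine Finset.card_le_card_of_injOn (fun e => if e = b then a else e) (fun e he => ?_)
    fun e he e' he' heq => ?_
  · simp only [Finset.mem_coe, mem_edgeCut] at he ⊢
    simp only [mem_edgeCut] at hlt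
    grind [splitOff]
  · grind

end SplitOff

section Lovasz

variable {α ε ι M : Type*}

theorem exists_subcover_with_private_elements [DecidableEq ε] {D : Finset ε} {I : Finset ι}
    {C : ι → Finset ε} (hcover : D ⊆ I.biUnion C) :
    ∃ J ⊆ I, D ⊆ J.biUnion C ∧ ∀ i ∈ J, ∃ x ∈ C i, ∀ j ∈ J, j ≠ i → x ∉ C j := by
  classical
  obtain ⟨J, hJI, hJ⟩ := exists_minimal_le_of_wellFoundedLT (fun J => D ⊆ J.biUnion C) I hcover
  refine ⟨J, hJI, hJ.prop, fun i hi => ?_⟩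
  by_contra! hno
  refine (Finset.erase_ssubset hi).not_ge (hJ.le_of_le (fun x hx => ?_) (Finset.erase_subset i J))
  obtain ⟨j, hj, hxj⟩ := Finset.mem_biUnion.mp (hJ.prop hx)
  rcases eq_or_ne j i with rfl | hji
  · obtain ⟨l, hl, hlj, hxl⟩ := hno x hxj
    exact Finset.mem_biUnion.mpr ⟨l, Finset.mem_erase.mpr ⟨hlj, hl⟩, hxl⟩
  · exact Finset.mem_biUnion.mpr ⟨j, Finset.mem_erase.mpr ⟨hji, hj⟩, hxj⟩

theorem two_lt_card_of_cover_by_halves [DecidableEq ε] {D : Finset ε} {J : Finset ι}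
    {C : ι → Finset ε} {a : ε} (ha : a ∈ D) (hcover : D ⊆ J.biUnion C) (haC : ∀ i ∈ J, a ∈ C i)
    (hhalf : ∀ i ∈ J, 2 * #(C i) ≤ #D) : 2 < #J := by
  have hcard : #D - 1 ≤ #J * (#D / 2 - 1) := by
    calc #D - 1 = #(D.erase a) := (Finset.card_erase_of_mem ha).symm
      _ ≤ #(J.biUnion fun i => (C i).erase a) := by
        refine Finset.card_le_card fun x hx => ?_
        obtain ⟨hxa, hxD⟩ := Finset.mem_erase.mp hx
        obtain ⟨i, hi, hxi⟩ := Finset.mem_biUnion.mp (hcover hxD)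
        exact Finset.mem_biUnion.mpr ⟨i, hi, Finset.mem_erase.mpr ⟨hxa, hxi⟩⟩
      _ ≤ #J * (#D / 2 - 1) := by
        refine Finset.card_biUnion_le_card_mul _ _ _ fun i hi => ?_
        rw [Finset.card_erase_of_mem (haC i hi)]
        have := hhalf i hi
        omega
  obtain ⟨i, hi, -⟩ := Finset.mem_biUnion.mp (hcover ha)
  have hhalf_pos : 2 ≤ #D := by
    have := Finset.card_pos.mpr ⟨a, haC i hi⟩
    have := hhalf i hi
    omega
  by_contra! hJ
  have : #J * (#D / 2 - 1) ≤ 2 * (#D / 2 - 1) := Nat.mul_le_mul_right _ hJ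
  omega

theorem exists_three_private_elements [DecidableEq ε] {D : Finset ε} {I : Finset ι}
    {C : ι → Finset ε} {a : ε} (ha : a ∈ D) (hcover : D ⊆ I.biUnion C) (haC : ∀ i ∈ I, a ∈ C i)
    (hhalf : ∀ i ∈ I, 2 * #(C i) ≤ #D) :
    ∃ i ∈ I, ∃ j ∈ I, ∃ l ∈ I, (∃ x ∈ C i, x ∉ C j ∧ x ∉ C l) ∧ (∃ y ∈ C j, y ∉ C i ∧ y ∉ C l) ∧
      ∃ z ∈ C l, z ∉ C i ∧ z ∉ C j := by
  obtain ⟨J, hJI, hJcover, hprivate⟩ := exists_subcover_with_private_elements hcover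
  obtain ⟨i, hi, j, hj, l, hl, hij, hil, hjl⟩ := Finset.two_lt_card.mp <|
    two_lt_card_of_cover_by_halves ha hJcover (fun i hi => haC i (hJI hi))
      fun i hi => hhalf i (hJI hi)
  obtain ⟨x, hxi, hx⟩ := hprivate i hi
  obtain ⟨y, hyj, hy⟩ := hprivate j hj
  obtain ⟨z, hzl, hz⟩ := hprivate l hl
  exact ⟨i, hJI hi, j, hJI hj, l, hJI hl, ⟨x, hxi, hx j hj hij.symm, hx l hl hil.symm⟩,
    ⟨y, hyj, hy i hi hij, hy l hl hjl.symm⟩, ⟨z, hzl, hz i hi hil, hz j hj hjl⟩⟩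

theorem exists_sym2_eq_and_ne {s t : ε → α} {v : α} (hloop : ∀ e, s e = v → t e ≠ v) :
    ∃ s' t' : ε → α, (∀ e, s(s' e, t' e) = s(s e, t e)) ∧ ∀ e, s' e ≠ v := by
  have edgewise : ∀ e, ∃ x y, s(x, y) = s(s e, t e) ∧ x ≠ v := by
    intro e
    by_cases hse : s e = v
    · exact ⟨t e, s e, Sym2.eq_swap, hloop e hse⟩
    · exact ⟨s e, t e, rfl, hse⟩
  choose s' t' hst hs' using edgewise
  exact ⟨s', t', hst, hs'⟩

variable [Fintype ε]

/-- Lovász's dangerous sets: the sets whose cut may drop below `k` when a pair of edges running from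
`X` to `v` is split off, namely those missing `v` and a further vertex and having at most `k + 1`
edges in their cut. -/
structure IsDangerous (s t : ε → α) (v : α) (k : ℕ) (X : Set α) : Prop where
  notMem : v ∉ X
  exists_notMem : ∃ y ∉ X, y ≠ v
  card_edgeCut_le : #(edgeCut s t X) ≤ k + 1

theorem exists_isDangerous_of_not_splittable [DecidableEq ε] {s t : ε → α} {v : α} {k : ℕ}
    {a b : ε} (ha : t a = v) (hb : t b = v) (hconn : EdgeConnectedOn s t {v}ᶜ k)
    (hsplit : ¬EdgeConnectedOn s (splitOff s t a b) {v}ᶜ k) :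
    ∃ X, IsDangerous s t v k X ∧ s a ∈ X ∧ s b ∈ X := by
  have of_notMem : ∀ X : Set α, ({v}ᶜ ∩ X).Nonempty → ({v}ᶜ \ X).Nonempty → v ∉ X →
      #(edgeCut s (splitOff s t a b) X) < k → ∃ X, IsDangerous s t v k X ∧ s a ∈ X ∧ s b ∈ X := by
    intro X hX hX' hvX hlt
    obtain ⟨haX, hbX⟩ := mem_edgeCut_of_card_splitOff_lt (ha.trans hb.symm)
      (hlt.trans_le (hconn X hX hX'))
    simp only [mem_edgeCut, ha, hb, hvX, iff_false, not_not] at haX hbX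
    have := card_edgeCut_le_splitOff_add_two s t a b X
    obtain ⟨y, hyv, hyX⟩ := hX'
    exact ⟨X, ⟨hvX, ⟨y, hyX, hyv⟩, by omega⟩, haX, hbX⟩
  unfold EdgeConnectedOn at hsplit
  push Not at hsplit
  obtain ⟨X, hX, hX', hlt⟩ := hsplit
  by_cases hvX : v ∈ X
  · exact of_notMem Xᶜ hX' (by rwa [Set.sdiff_compl]) (not_not.mpr hvX) (by rwa [edgeCut_compl])
  · exact of_notMem X hX hX' hvX hlt

open scoped Classical in
theorem IsDangerous.two_mul_card_le {s t : ε → α} {v : α} {k : ℕ} {X : Set α}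
    (hX : IsDangerous s t v k X) (hne : X.Nonempty) (hs : ∀ e, s e ≠ v)
    (heven : Even #{e | t e = v}) (hconn : EdgeConnectedOn s t {v}ᶜ k) :
    2 * #{e | t e = v ∧ s e ∈ X} ≤ #{e | t e = v} := by
  obtain ⟨x, hx⟩ := hne
  obtain ⟨y, hyX, hyv⟩ := hX.exists_notMem
  have hinsert : k ≤ #(edgeCut s t (insert v X)) :=
    hconn _ ⟨x, ne_of_mem_of_not_mem hx hX.notMem, Or.inr hx⟩ ⟨y, hyv, by simp [hyv, hyX]⟩
  have hexchange := card_edgeCut_insert (t := t) hs hX.notMem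
  have hdeg : #{e | t e = v ∧ s e ∈ X} + #{e | t e = v ∧ s e ∉ X} = #{e | t e = v} := by
    rw [← Finset.filter_filter, ← Finset.filter_filter, Finset.card_filter_add_card_filter_not]
  have hcut := hX.card_edgeCut_le
  obtain ⟨m, hm⟩ := heven
  omega

theorem not_isDangerous_of_private {s t : ε → α} {v : α} {k : ℕ} {a x y z : ε} {X Y Z : Set α}
    (hk : 2 ≤ k) (hs : ∀ e, s e ≠ v) (ha : t a = v) (hconn : EdgeConnectedOn s t {v}ᶜ k)
    (hX : IsDangerous s t v k X) (hY : IsDangerous s t v k Y) (haXYZ : s a ∈ X ∩ Y ∩ Z)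
    (hx : s x ∈ X \ (Y ∪ Z)) (hy : s y ∈ Y \ (X ∪ Z)) (hz : s z ∈ Z \ (X ∪ Y)) :
    ¬IsDangerous s t v k Z := by
  intro hZ
  have le_of_separates : ∀ (Q : Set α) (e e' : ε), s e ∈ Q → s e' ∉ Q → k ≤ #(edgeCut s t Q) :=
    fun Q e e' he he' => hconn Q ⟨s e, hs e, he⟩ ⟨s e', hs e', he'⟩
  have hcenter := le_of_separates _ a x haXYZ fun h => hx.2 (Or.inl h.1.2)
  have honlyX := le_of_separates _ x a hx fun h => h.2 (Or.inl haXYZ.1.2)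
  have honlyY := le_of_separates _ y a hy fun h => h.2 (Or.inl haXYZ.1.1)
  have honlyZ := le_of_separates _ z a hz fun h => h.2 (Or.inl haXYZ.1.1)
  have hvenn := card_edgeCut_venn_le haXYZ
    (show t a ∉ X ∪ Y ∪ Z by simp [ha, hX.notMem, hY.notMem, hZ.notMem])
  have := hX.card_edgeCut_le
  have := hY.card_edgeCut_le
  have := hZ.card_edgeCut_le
  omega

open scoped Classical in
/-- Lovász's form of Mader's splitting lemma. -/
theorem exists_splittable_pair {s t : ε → α} {v : α} {k : ℕ} {a : ε} (hk : 2 ≤ k)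
    (hs : ∀ e, s e ≠ v) (ha : t a = v) (heven : Even #{e | t e = v})
    (hconn : EdgeConnectedOn s t {v}ᶜ k) :
    ∃ b ≠ a, t b = v ∧ EdgeConnectedOn s (splitOff s t a b) {v}ᶜ k := by
  by_contra! hno
  have hdangerous := fun b (hb : b ≠ a ∧ t b = v) =>
    exists_isDangerous_of_not_splittable ha hb.2 hconn (hno b hb.1 hb.2)
  choose! X hX haX hbX using hdangerous
  let D : Finset ε := {e | t e = v}
  let C : ε → Finset ε := fun b => {e | t e = v ∧ s e ∈ X b}
  have haD : a ∈ D := by simpa [D] using ha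
  have hother : ∀ b ∈ D.erase a, b ≠ a ∧ t b = v := by simp [D]
  have haC : ∀ b ∈ D.erase a, a ∈ C b := fun b hb => by simp [C, ha, haX b (hother b hb)]
  have hcover : D ⊆ (D.erase a).biUnion C := by
    intro e he
    rcases eq_or_ne e a with rfl | hea
    · obtain ⟨b, hb⟩ : (D.erase e).Nonempty := by
        rw [← Finset.card_pos, Finset.card_erase_of_mem he]
        have := Finset.card_pos.mpr ⟨e, he⟩
        obtain ⟨m, hm⟩ : Even #D := heven
        omega
      exact Finset.mem_biUnion.mpr ⟨b, hb, haC b hb⟩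
    · have hb := Finset.mem_erase.mpr ⟨hea, he⟩
      exact Finset.mem_biUnion.mpr ⟨e, hb, by simp [C, hother e hb, hbX e (hother e hb)]⟩
  have hhalf : ∀ b ∈ D.erase a, 2 * #(C b) ≤ #D := fun b hb =>
    (hX b (hother b hb)).two_mul_card_le ⟨_, haX b (hother b hb)⟩ hs heven hconn
  obtain ⟨i, hi, j, hj, l, hl, ⟨x, hxi, hxj, hxl⟩, ⟨y, hyj, hyi, hyl⟩, z, hzl, hzi, hzj⟩ :=
    exists_three_private_elements haD hcover haC hhalf
  simp only [C, Finset.mem_filter_univ, not_and] at hxi hxj hxl hyj hyi hyl hzl hzi hzj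
  refine not_isDangerous_of_private hk hs ha hconn (hX i (hother i hi)) (hX j (hother j hj))
    ⟨⟨haX i (hother i hi), haX j (hother j hj)⟩, haX l (hother l hl)⟩
    ⟨hxi.2, not_or.mpr ⟨hxj hxi.1, hxl hxi.1⟩⟩ ⟨hyj.2, not_or.mpr ⟨hyi hyj.1, hyl hyj.1⟩⟩
    ⟨hzl.2, not_or.mpr ⟨hzi hzl.1, hzj hzl.1⟩⟩ (hX l (hother l hl))

variable (M) in
theorem exists_complete_splitting [AddCommGroup M] [DecidableEq α] {s t : ε → α} {v : α} {k : ℕ}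
    (hk : 2 ≤ k) (hs : ∀ e, s e ≠ v) (heven : Even #{e | t e = v})
    (hconn : EdgeConnectedOn s t {v}ᶜ k) :
    ∃ t' : ε → α, (∀ e, t' e ≠ v) ∧ EdgeConnectedOn s t' {v}ᶜ k ∧
      (HasNowhereZeroFlow M s t' → HasNowhereZeroFlow M s t) := by
  classical
  induction hd : #{e | t e = v} using Nat.strong_induction_on generalizing t with
  | _ d ih =>
  by_cases hv : ∀ e, t e ≠ v
  · exact ⟨t, hv, hconn, id⟩
  push Not at hv
  obtain ⟨a, ha⟩ := hv
  obtain ⟨b, hba, hb, hsplit⟩ :=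
    exists_splittable_pair hk hs ha (by convert heven) hconn
  have hedges : ({e | splitOff s t a b e = v} : Finset ε) =
      ({e | t e = v} : Finset ε) \ {a, b} := by
    ext e
    simp only [Finset.mem_sdiff, Finset.mem_filter_univ, Finset.mem_insert, Finset.mem_singleton]
    by_cases he : e = a ∨ e = b <;> simp [splitOff, he, hs b]
  have hcard : #{e | splitOff s t a b e = v} + 2 = #{e | t e = v} := by
    rw [hedges, ← Finset.card_pair hba.symm, Finset.card_sdiff_add_card_eq_card]
    simp [Finset.insert_subset_iff, ha, hb]
  obtain ⟨t', ht', hconn', hflow⟩ := ih _ (by omega)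
    (by rwa [← hcard, Nat.even_add, iff_true_right even_two] at heven) hsplit rfl
  exact ⟨t', ht', hconn', fun h => (hflow h).of_splitOff hba.symm (ha.trans hb.symm)⟩

variable (M) in
theorem exists_splitting_onto_ne [AddCommGroup M] [DecidableEq α] {s t : ε → α} {v : α} {k : ℕ}
    (hk : 2 ≤ k) (hloop : ∀ e, s e = v → t e ≠ v) (heven : Even #{e | s e = v ∨ t e = v})
    (hconn : EdgeConnectedOn s t {v}ᶜ k) :
    ∃ s' t' : ε → {u // u ≠ v}, EdgeConnectedOn s' t' Set.univ k ∧
      (HasNowhereZeroFlow M s' t' → HasNowhereZeroFlow M s t) := by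
  obtain ⟨s', t', hst, hs'⟩ := exists_sym2_eq_and_ne hloop
  have hincident : ∀ e, t' e = v ↔ s e = v ∨ t e = v := fun e => by
    simpa [(hs' e).symm, eq_comm] using Sym2.ext_iff.mp (hst e) v
  have hconn' : EdgeConnectedOn s' t' {v}ᶜ k := fun X hX hX' => by
    rw [edgeCut_congr_of_sym2_eq hst]
    exact hconn X hX hX'
  obtain ⟨t'', ht'', hconn'', hflow⟩ := exists_complete_splitting M hk hs'
    (by simpa only [hincident] using heven) hconn'
  refine ⟨fun e => ⟨s' e, hs' e⟩, fun e => ⟨t'' e, ht'' e⟩, ?_, fun h => ?_⟩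
  · have hrange : Set.range (Subtype.val : {u // u ≠ v} → α) = {v}ᶜ := Subtype.range_val
    exact .of_comp_injective Subtype.val_injective (hrange ▸ hconn'')
  · exact (hflow (h.comp Subtype.val)).of_sym2_eq hst

end Lovasz

section ModThree

variable {V E : Type}

/-- The multigraph obtained from the one with edges from `s e` to `t e` by deleting all loops. -/
def deleteLoops (s t : E → V) : Multigraph V {e // s e ≠ t e} where
  fst e := s e
  snd e := t e
  no_loop e := e.2

variable [Fintype E]

theorem EdgeConnectedOn.deleteLoops {s t : E → V} {U : Set V} {k : ℕ}
    [Fintype {e // s e ≠ t e}] (h : EdgeConnectedOn s t U k) :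
    EdgeConnectedOn (deleteLoops s t).fst (deleteLoops s t).snd U k := by
  intro X hX hX'
  refine (h X hX hX').trans ?_
  rw [← Finset.card_map (Function.Embedding.subtype _)]
  refine Finset.card_le_card fun e he => ?_
  rw [mem_edgeCut] at he
  exact Finset.mem_map.mpr ⟨⟨e, fun hst => he (by rw [hst])⟩, mem_edgeCut.mpr he, rfl⟩

variable [DecidableEq V]

theorem outDeg_sub_inDeg {R : Type*} [Ring R] (G : Multigraph V E) (D : E → Bool) (v : V) :
    ((G.outDeg D v - G.inDeg D v : ℤ) : R) =
      netFlow G.fst G.snd (fun e => if D e then (1 : R) else -1) v := by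
  simp only [outDeg, inDeg, Finset.card_filter, netFlow_apply]
  push_cast
  rw [← Finset.sum_sub_distrib]
  refine Finset.sum_congr rfl fun e _ => ?_
  cases hD : D e <;> by_cases hfst : G.fst e = v <;> by_cases hsnd : G.snd e = v <;>
    simp [tail, head, hD, hfst, hsnd]

theorem HasNowhereZeroFlow.mod3Orientable {G : Multigraph V E}
    (h : HasNowhereZeroFlow (ZMod 3) G.fst G.snd) : G.Mod3Orientable := by
  obtain ⟨φ, hφ, hflow⟩ := h
  have eq_sign : ∀ x : ZMod 3, x ≠ 0 → (if decide (x = 1) then 1 else -1) = x := by decide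
  refine ⟨fun e => decide (φ e = 1), fun v => ?_⟩
  simp only [outDeg_sub_inDeg, eq_sign _ (hφ _)]
  rw [hflow, Finsupp.zero_apply]

theorem Z3Connected.exists_netFlow_eq [Fintype V] {G : Multigraph V E} (hG : G.Z3Connected)
    {β : V → ZMod 3} (hβ : ∑ v, β v = 0) :
    ∃ ψ : E → ZMod 3, (∀ e, ψ e ≠ 0) ∧ ∀ v, netFlow G.fst G.snd ψ v = β v := by
  obtain ⟨D, hD⟩ := hG β hβ
  refine ⟨fun e => if D e then 1 else -1, fun e => ?_, fun v => ?_⟩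
  · dsimp only
    split_ifs <;> decide
  · rw [← outDeg_sub_inDeg, hD v]

theorem Z3Connected.hasNowhereZeroFlow_of_netFlow_eq_zero {G : Multigraph V E} {S : Finset V}
    {F : Finset E} {hF : ∀ e ∈ F, G.fst e ∈ S ∧ G.snd e ∈ S}
    (hH : (G.subgraphOn S F hF).Z3Connected) {φ : E → ZMod 3} (hφ : ∀ e, φ e ≠ 0)
    (hflow : ∀ v ∉ S, netFlow G.fst G.snd φ v = 0) :
    HasNowhereZeroFlow (ZMod 3) G.fst G.snd := by
  classical
  let H := G.subgraphOn S F hF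
  let c := netFlow G.fst G.snd φ
  let b := netFlow H.fst H.snd fun e => φ e
  have hsum : ∑ v : {v // v ∈ S}, (b v - c v) = 0 := by
    rw [Finset.sum_sub_distrib, sum_netFlow _ _ _ (by simp), zero_sub, neg_eq_zero,
      Finset.sum_coe_sort S c, sum_netFlow _ _ _ hflow]
  obtain ⟨ψ, hψ, hψflow⟩ := hH.exists_netFlow_eq hsum
  let φ' : E → ZMod 3 := fun e => if he : e ∈ F then ψ ⟨e, he⟩ else φ e
  have hchange : netFlow G.fst G.snd (φ' - φ) =
      (netFlow H.fst H.snd (ψ - fun e : {e // e ∈ F} => φ e)).mapDomain Subtype.val := by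
    rw [← netFlow_comp,
      ← netFlow_subtype _ _ (φ' - φ) (· ∈ F) fun e he => Or.inl (by simp [φ', he])]
    congr 1
    exact funext fun e => by simp [φ']
  refine ⟨φ', fun e => ?_, Finsupp.ext fun v => ?_⟩
  · by_cases he : e ∈ F <;> simp [φ', he, hψ, hφ]
  · have hsplit : netFlow G.fst G.snd φ' = c + netFlow G.fst G.snd (φ' - φ) := by
      rw [netFlow_sub, add_sub_cancel]
    rw [hsplit, hchange, Finsupp.add_apply, Finsupp.zero_apply]
    by_cases hv : v ∈ S
    · rw [Finsupp.mapDomain_apply Subtype.val_injective _ (⟨v, hv⟩ : {v // v ∈ S}), netFlow_sub,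
        Finsupp.sub_apply, hψflow]
      change c v + (b _ - c v - b _) = 0
      abel
    · rw [hflow v hv, Finsupp.mapDomain_of_notMem_range _ _ (by simpa using hv), add_zero]

theorem Z3Connected.hasNowhereZeroFlow_of_contraction {W : Type*} {G : Multigraph V E}
    {S : Finset V} {F : Finset E} {hF : ∀ e ∈ F, G.fst e ∈ S ∧ G.snd e ∈ S}
    (hH : (G.subgraphOn S F hF).Z3Connected) {p : V → W} (hp : ∀ u, ∀ v ∉ S, p u = p v → u = v)
    (h : HasNowhereZeroFlow (ZMod 3) (p ∘ G.fst) (p ∘ G.snd)) :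
    HasNowhereZeroFlow (ZMod 3) G.fst G.snd := by
  obtain ⟨φ, hφ, hflow⟩ := h
  refine hH.hasNowhereZeroFlow_of_netFlow_eq_zero hφ fun v hv => ?_
  rw [← netFlow_comp_apply fun u => hp u v hv, hflow, Finsupp.zero_apply]

theorem exists_contraction_of_not_z3Reduced [Finite V] {G : Multigraph V E} (hG : ¬G.Z3Reduced) :
    ∃ (W : Type) (p : V → W), p.Surjective ∧ Nat.card W < Nat.card V ∧
      (HasNowhereZeroFlow (ZMod 3) (p ∘ G.fst) (p ∘ G.snd) →
        HasNowhereZeroFlow (ZMod 3) G.fst G.snd) := by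
  classical
  unfold Z3Reduced at hG
  push Not at hG
  obtain ⟨S, F, hF, hS, hH⟩ := hG
  obtain ⟨x, hx, y, hy, hxy⟩ := Finset.one_lt_card.mp hS
  let p : V → V := fun v => if v ∈ S then x else v
  have hp : ∀ u, ∀ v ∉ S, p u = p v → u = v := by grind
  have hnot_inj : ¬(Set.rangeFactorization p).Injective := fun hinj =>
    hxy (hinj (Subtype.ext (by simp [p, Set.rangeFactorization, hy])))
  refine ⟨Set.range p, Set.rangeFactorization p, Set.rangeFactorization_surjective, ?_, fun h => ?_⟩
  · cases nonempty_fintype V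
    simpa only [Nat.card_eq_fintype_card] using
      Fintype.card_lt_of_surjective_not_injective _ Set.rangeFactorization_surjective hnot_inj
  · exact hH.hasNowhereZeroFlow_of_contraction hp (h.comp Subtype.val)

variable [Fintype V]

theorem EdgeConnected.edgeConnectedOn_univ {G : Multigraph V E} {k : ℕ} (hG : G.EdgeConnected k) :
    EdgeConnectedOn G.fst G.snd Set.univ k := by
  classical
  rintro X ⟨x, -, hx⟩ ⟨y, -, hy⟩
  have hcut := hG X.toFinset ⟨x, by simpa using hx⟩ fun h =>
    hy (Set.mem_toFinset.mp (h ▸ Finset.mem_univ y))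
  simpa [cut, edgeCut] using hcut

theorem EdgeConnectedOn.edgeConnected {G : Multigraph V E} {k : ℕ}
    (hG : EdgeConnectedOn G.fst G.snd Set.univ k) : G.EdgeConnected k := by
  rintro A ⟨x, hx⟩ hA
  obtain ⟨y, hy⟩ : ∃ y, y ∉ A := by simpa [Finset.eq_univ_iff_forall] using hA
  simpa [cut, edgeCut] using hG A ⟨x, trivial, hx⟩ ⟨y, trivial, hy⟩

theorem EdgeConnected.le_degree [Nontrivial V] {G : Multigraph V E} {k : ℕ}
    (hG : G.EdgeConnected k) (v : V) : k ≤ G.degree v := by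
  refine (hG {v} (Finset.singleton_nonempty v) (Finset.singleton_ne_univ v)).trans
    (Finset.card_le_card fun e he => ?_)
  simp only [cut, Finset.mem_filter_univ, Finset.mem_singleton] at he
  refine Finset.mem_filter.mpr ⟨Finset.mem_univ e, ?_⟩
  rw [Incident]
  tauto

end ModThree

theorem exists_smaller_of_edgeConnected {V E : Type} [Fintype V] [DecidableEq V] [Nontrivial V]
    [Fintype E] {k : ℕ} (hk : 2 ≤ k) (heven : Even k) {G : Multigraph V E}
    (hG : G.EdgeConnected k) (hdeg : G.Z3Reduced → ∃ v, G.degree v ≤ k) :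
    ∃ (W : Type) (s t : E → W), Finite W ∧ Nat.card W < Nat.card V ∧
      EdgeConnectedOn s t Set.univ k ∧
      (HasNowhereZeroFlow (ZMod 3) s t → HasNowhereZeroFlow (ZMod 3) G.fst G.snd) := by
  have hconn := hG.edgeConnectedOn_univ
  by_cases hred : G.Z3Reduced
  · obtain ⟨v, hv⟩ := hdeg hred
    have hv_even : Even (G.degree v) := by rwa [hv.antisymm (hG.le_degree v)]
    obtain ⟨s, t, hconn', hflow⟩ := exists_splitting_onto_ne (ZMod 3) hk
      (fun e hfst hsnd => G.no_loop e (hfst.trans hsnd.symm)) hv_even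
      (hconn.mono (Set.subset_univ {v}ᶜ))
    exact ⟨_, s, t, inferInstance, Finite.card_subtype_lt (x := v) (not_not.mpr rfl), hconn', hflow⟩
  · obtain ⟨W, p, hp, hcard, hflow⟩ := exists_contraction_of_not_z3Reduced hred
    exact ⟨W, _, _, .of_surjective p hp, hcard, hconn.comp_surjective hp, hflow⟩

theorem hasNowhereZeroFlow_of_edgeConnectedOn_univ {k : ℕ} (hk : 2 ≤ k) (heven : Even k)
    (hyp : ∀ (V E : Type) [Fintype V] [DecidableEq V] [Fintype E] [DecidableEq E]
      (G : Multigraph V E), Nonempty V → G.EdgeConnected k → G.Z3Reduced → ∃ v, G.degree v ≤ k)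
    {V E : Type} [Finite V] [Fintype E] (s t : E → V) (hst : EdgeConnectedOn s t Set.univ k) :
    HasNowhereZeroFlow (ZMod 3) s t := by
  classical
  induction hn : Nat.card V using Nat.strong_induction_on generalizing V E with
  | _ n ih =>
  rcases subsingleton_or_nontrivial V with _ | _
  · exact .of_subsingleton s t
  · cases nonempty_fintype V
    have hG := hst.deleteLoops.edgeConnected
    obtain ⟨W, s', t', _, hcard, hconn, hflow⟩ := exists_smaller_of_edgeConnected hk heven hG
      (hyp _ _ _ inferInstance hG)
    exact (hflow (ih _ (hn ▸ hcard) s' t' hconn rfl)).of_subtype_ne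

theorem stmt_15_general {k : ℕ} (hk : 0 < k) (heven : Even k)
    (hyp : ∀ (V E : Type) [Fintype V] [DecidableEq V] [Fintype E] [DecidableEq E]
      (G : Multigraph V E), Nonempty V → G.EdgeConnected k → G.Z3Reduced → ∃ v, G.degree v ≤ k)
    {V E : Type} [Fintype V] [DecidableEq V] [Fintype E] (G : Multigraph V E)
    (hG : G.EdgeConnected k) : G.Mod3Orientable := by
  have htwo : 2 ≤ k := by
    obtain ⟨m, hm⟩ := heven
    omega
  exact (hasNowhereZeroFlow_of_edgeConnectedOn_univ htwo heven hyp _ _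
    hG.edgeConnectedOn_univ).mod3Orientable

/-- If every (nonempty) `ℤ₃`-reduced graph has a vertex of degree at most 4,
then every 4-edge-connected graph admits a mod 3-orientation. -/
theorem stmt_15
    (hyp : ∀ (V E : Type) [Fintype V] [DecidableEq V] [Fintype E] [DecidableEq E] (G : Multigraph V E),
      Nonempty V → G.Z3Reduced → ∃ v : V, G.degree v ≤ 4)
    {V E : Type} [Fintype V] [DecidableEq V] [Fintype E] [DecidableEq E] (G : Multigraph V E) (h4 : G.EdgeConnected 4) :
    G.Mod3Orientable :=
  stmt_15_general (by norm_num) (by decide) (fun V E _ _ _ _ G hV _ hG => hyp V E G hV hG) G h4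

end Multigraph
end
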